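/- arXiv:1206.4541 — 4 statements merged into one kernel-verified Lean document; each statement's English description precedes it below -/
import Mathlib

section
/- Let c > 0 be a real number, let δ be a real number with 3 < δ < (5π/4)·c, and let n be a positive even integer with 2c/π < n ≤ 2c/π + (2/π²)·δ·log(4·e·π·c/δ) − 3. Let ψ be the n-th PSWF with band limit c, with ODE eigenvalue χ_n, and assume ψ(0) ≠ 0. Then (7/(2·|ψ(0)|)) · ((4·χ_n/c² − 2)⁴ / (3·χ_n/c² − 1)) · (χ_n − c²)^{1/4} < (448/3)·(8/π)^{1/4}·δ^{1/4}·c^{3/4}·(1 + 6δ/(π·c))·(1 + 16δ/(π·c))³. -/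
open Real

/-- `IsPSWF c n ψ χ lam` : `ψ` is the `n`-th prolate spheroidal wave function with
band limit `c`, ODE eigenvalue `χ` and integral eigenvalue `lam`. -/
def IsPSWF (c : ℝ) (n : ℕ) (ψ : ℝ → ℝ) (χ : ℝ) (lam : ℂ) : Prop :=
  ContinuousOn ψ (Set.Icc (-1) 1) ∧
  (∀ x ∈ Set.Ioo (-1 : ℝ) 1, DifferentiableAt ℝ ψ x ∧ DifferentiableAt ℝ (deriv ψ) x) ∧
  (∀ x ∈ Set.Ioo (-1 : ℝ) 1,
    (1 - x ^ 2) * deriv (deriv ψ) x - 2 * x * deriv ψ x + (χ - c ^ 2 * x ^ 2) * ψ x = 0) ∧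
  {x | x ∈ Set.Ioo (-1 : ℝ) 1 ∧ ψ x = 0}.Finite ∧
  {x | x ∈ Set.Ioo (-1 : ℝ) 1 ∧ ψ x = 0}.ncard = n ∧
  (∫ t in (-1 : ℝ)..1, (ψ t) ^ 2) = 1 ∧
  ∀ x ∈ Set.Icc (-1 : ℝ) 1,
    lam * (ψ x : ℂ) =
      ∫ t in (-1 : ℝ)..1, (ψ t : ℂ) * Complex.exp (Complex.I * (c : ℂ) * (x : ℂ) * (t : ℂ))

open Set Filter Topology

/-!
Continuity at the endpoints forces `(1 - x²) ψ' → 0` there, hence by a Wronskian argument `ψ' 0 = 0`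
as soon as `ψ 0 ≠ 0`. Three facts about such a solution with `n` zeros give the estimate.

* If `χ < c²` then Sturm comparison of `(1 - x²) ψ'` with a sine of frequency `c` shows that
  consecutive critical points are more than `π / c` apart, so `n < 2 c / π`. Hence `c² ≤ χ`.
* If `χ ≥ c² (1 + 2 a)`, the comparison functions
  `((1 - t) / (1 - t + a)) ^ (1 / 4) * sin (c Φ(t) - σ)`, `Φ' = -√((1 - t + a) / (1 - t))`,
  oscillate more slowly than `√(1 - t²) ψ` on `[0, 1)`, so `ψ` has at least `2 N` zeros whenever
  `N π < c (Φ 0 - Φ 1)`. With `a = 4 δ / (π c)` the upper bound on `n` gives `χ < c² + 8 δ c / π`.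
* If `c² ≤ χ`, an energy argument gives `1 = ∫ ψ² ≤ 2 (ψ 0)² (1 + 3 χ / c)`, which bounds `|ψ 0|`
  from below.
-/

/-! ### Sturm comparison -/

/-- `u` solves `u'' = -K u` on `S`, the Liouville normal form of a second order linear equation.
The derivative is carried by an existential, so that nothing is asked of `u` outside `S`. -/
def SolvesNormalForm (K u : ℝ → ℝ) (S : Set ℝ) : Prop :=
  ∃ u' : ℝ → ℝ, ∀ t ∈ S, HasDerivAt u (u' t) t ∧ HasDerivAt u' (-(K t * u t)) t

namespace SolvesNormalForm

variable {K L u : ℝ → ℝ} {S T : Set ℝ}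

lemma mono (h : SolvesNormalForm K u S) (hTS : T ⊆ S) : SolvesNormalForm K u T :=
  h.imp fun _ hu t ht => hu t (hTS ht)

lemma congr (h : SolvesNormalForm K u S) (hKL : EqOn K L S) : SolvesNormalForm L u S :=
  h.imp fun _ hu t ht => hKL ht ▸ hu t ht

lemma neg (h : SolvesNormalForm K u S) : SolvesNormalForm K (-u) S := by
  obtain ⟨u', hu⟩ := h
  refine ⟨-u', fun t ht => ⟨(hu t ht).1.neg, ?_⟩⟩
  simpa only [Pi.neg_apply, mul_neg] using (hu t ht).2.neg

lemma continuousOn (h : SolvesNormalForm K u S) : ContinuousOn u S := by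
  obtain ⟨u', hu⟩ := h
  exact fun t ht => (hu t ht).1.continuousAt.continuousWithinAt

end SolvesNormalForm

-- Liouville's transformation of `(s² f')' = -Q f`, written as the system `s² f' = g`, `g' = -Q f`.
lemma solvesNormalForm_mul {s s' s'' f g Q : ℝ → ℝ} {S : Set ℝ} (hs₀ : ∀ t ∈ S, s t ≠ 0)
    (hs : ∀ t ∈ S, HasDerivAt s (s' t) t) (hs' : ∀ t ∈ S, HasDerivAt s' (s'' t) t)
    (hf : ∀ t ∈ S, HasDerivAt f (g t / s t ^ 2) t)
    (hg : ∀ t ∈ S, HasDerivAt g (-(Q t * f t)) t) :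
    SolvesNormalForm (fun t => Q t / s t ^ 2 - s'' t / s t) (fun t => s t * f t) S := by
  refine ⟨fun t => s' t * f t + g t / s t, fun t ht => ⟨?_, ?_⟩⟩
  · convert! (hs t ht).mul (hf t ht) using 1
    have := hs₀ t ht
    field
  · convert! ((hs' t ht).mul (hf t ht)).add ((hg t ht).div (hs t ht) (hs₀ t ht)) using 1
    have := hs₀ t ht
    field

lemma forall_pos_or_forall_neg_of_ne_zero {f : ℝ → ℝ} {S : Set ℝ} (hS : IsPreconnected S)
    (hf : ContinuousOn f S) (hne : ∀ t ∈ S, f t ≠ 0) :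
    (∀ t ∈ S, 0 < f t) ∨ ∀ t ∈ S, f t < 0 := by
  by_contra! ⟨⟨a, ha, hfa⟩, b, hb, hfb⟩
  obtain ⟨t, ht, hft⟩ := hS.intermediate_value ha hb hf ⟨hfa, hfb⟩
  exact hne t ht hft

lemma deriv_nonneg_of_pos_right {u : ℝ → ℝ} {u' α β : ℝ} (hαβ : α < β)
    (hu : HasDerivAt u u' α) (hα : u α = 0) (hpos : ∀ t ∈ Ioo α β, 0 < u t) : 0 ≤ u' := by
  refine ge_of_tendsto ((hasDerivWithinAt_iff_tendsto_slope' self_notMem_Ioi).1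
    hu.hasDerivWithinAt) ?_
  filter_upwards [Ioo_mem_nhdsGT hαβ] with t ht
  rw [slope_def_field, hα, sub_zero]
  exact div_nonneg (hpos t ht).le (sub_nonneg.2 ht.1.le)

lemma deriv_nonpos_of_pos_left {u : ℝ → ℝ} {u' α β : ℝ} (hαβ : α < β)
    (hu : HasDerivAt u u' β) (hβ : u β = 0) (hpos : ∀ t ∈ Ioo α β, 0 < u t) : u' ≤ 0 := by
  refine le_of_tendsto ((hasDerivWithinAt_iff_tendsto_slope' self_notMem_Iio).1
    hu.hasDerivWithinAt) ?_
  filter_upwards [Ioo_mem_nhdsLT hαβ] with t ht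
  rw [slope_def_field, hβ, sub_zero]
  exact div_nonpos_of_nonneg_of_nonpos (hpos t ht).le (sub_nonpos.2 ht.2.le)

namespace SolvesNormalForm

variable {K L u v : ℝ → ℝ} {α β : ℝ}

-- The Wronskian `u' v - u v'` would be strictly increasing, from a value `≥ 0` to one `≤ 0`.
lemma not_forall_pos_of_lt (hu : SolvesNormalForm K u (Icc α β))
    (hv : SolvesNormalForm L v (Icc α β)) (hαβ : α < β) (hKL : ∀ t ∈ Ioo α β, K t < L t)
    (hα : u α = 0) (hβ : u β = 0) (hu_pos : ∀ t ∈ Ioo α β, 0 < u t) :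
    ¬ ∀ t ∈ Ioo α β, 0 < v t := by
  intro hv_pos
  have hv_nonneg : ∀ t ∈ Icc α β, 0 ≤ v t := by
    rw [← closure_Ioo hαβ.ne]
    exact fun t ht => le_on_closure (fun s hs => (hv_pos s hs).le) continuousOn_const
      (by rw [closure_Ioo hαβ.ne]; exact hv.continuousOn) ht
  obtain ⟨u', hu⟩ := hu
  obtain ⟨v', hv⟩ := hv
  have hαmem : α ∈ Icc α β := left_mem_Icc.2 hαβ.le
  have hβmem : β ∈ Icc α β := right_mem_Icc.2 hαβ.le
  have hderiv : ∀ t ∈ Icc α β,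
      HasDerivAt (fun t => u' t * v t - u t * v' t) ((L t - K t) * (u t * v t)) t := by
    intro t ht
    convert! ((hu t ht).2.mul (hv t ht).1).sub ((hu t ht).1.mul (hv t ht).2) using 1
    ring
  have hmono : StrictMonoOn (fun t => u' t * v t - u t * v' t) (Icc α β) := by
    refine strictMonoOn_of_hasDerivWithinAt_pos (convex_Icc α β)
      (fun t ht => (hderiv t ht).continuousAt.continuousWithinAt)
      (fun t ht => (hderiv t (interior_subset ht)).hasDerivWithinAt) fun t ht => ?_
    rw [interior_Icc] at ht
    exact mul_pos (sub_pos.2 (hKL t ht)) (mul_pos (hu_pos t ht) (hv_pos t ht))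
  have hlt : u' α * v α < u' β * v β := by
    simpa only [hα, hβ, zero_mul, sub_zero] using hmono hαmem hβmem hαβ
  have hα' := deriv_nonneg_of_pos_right hαβ (hu α hαmem).1 hα hu_pos
  have hβ' := deriv_nonpos_of_pos_left hαβ (hu β hβmem).1 hβ hu_pos
  linarith [mul_nonneg hα' (hv_nonneg α hαmem),
    mul_nonpos_of_nonpos_of_nonneg hβ' (hv_nonneg β hβmem)]

theorem exists_zero_of_lt (hu : SolvesNormalForm K u (Icc α β))
    (hv : SolvesNormalForm L v (Icc α β)) (hαβ : α < β) (hKL : ∀ t ∈ Ioo α β, K t < L t)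
    (hα : u α = 0) (hβ : u β = 0) (hu_ne : ∀ t ∈ Ioo α β, u t ≠ 0) :
    ∃ t ∈ Ioo α β, v t = 0 := by
  wlog hu_pos : ∀ t ∈ Ioo α β, 0 < u t generalizing u
  · have hu_neg := (forall_pos_or_forall_neg_of_ne_zero isPreconnected_Ioo
      (hu.continuousOn.mono Ioo_subset_Icc_self) hu_ne).resolve_left hu_pos
    exact this hu.neg (by simp [hα]) (by simp [hβ]) (fun t ht => neg_ne_zero.2 (hu_ne t ht))
      fun t ht => neg_pos.2 (hu_neg t ht)
  by_contra! hv_ne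
  rcases forall_pos_or_forall_neg_of_ne_zero isPreconnected_Ioo
    (hv.continuousOn.mono Ioo_subset_Icc_self) hv_ne with hv_pos | hv_neg
  · exact hu.not_forall_pos_of_lt hv hαβ hKL hα hβ hu_pos hv_pos
  · exact hu.not_forall_pos_of_lt hv.neg hαβ hKL hα hβ hu_pos fun t ht => neg_pos.2 (hv_neg t ht)

end SolvesNormalForm

lemma exists_consecutive_zeros {u : ℝ → ℝ} {y z ξ : ℝ} (hu : ContinuousOn u (Icc y z))
    (hξ : ξ ∈ Icc y z) (hy : u y = 0) (hz : u z = 0) (hξ₀ : u ξ ≠ 0) :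
    ∃ α ∈ Icc y ξ, ∃ β ∈ Icc ξ z, α < β ∧ u α = 0 ∧ u β = 0 ∧ ∀ t ∈ Ioo α β, u t ≠ 0 := by
  have hleft : IsCompact (Icc y ξ ∩ u ⁻¹' {0}) := isCompact_Icc.of_isClosed_subset
    ((hu.mono (Icc_subset_Icc_right hξ.2)).preimage_isClosed_of_isClosed isClosed_Icc
      isClosed_singleton) inter_subset_left
  have hright : IsCompact (Icc ξ z ∩ u ⁻¹' {0}) := isCompact_Icc.of_isClosed_subset
    ((hu.mono (Icc_subset_Icc_left hξ.1)).preimage_isClosed_of_isClosed isClosed_Icc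
      isClosed_singleton) inter_subset_left
  obtain ⟨α, ⟨hαmem, hα⟩, hαmax⟩ := hleft.exists_isGreatest ⟨y, left_mem_Icc.2 hξ.1, hy⟩
  obtain ⟨β, ⟨hβmem, hβ⟩, hβmin⟩ := hright.exists_isLeast ⟨z, right_mem_Icc.2 hξ.2, hz⟩
  have hαξ : α < ξ := hαmem.2.lt_of_ne (by rintro rfl; exact hξ₀ hα)
  refine ⟨α, hαmem, β, hβmem, hαξ.trans_le hβmem.1, hα, hβ, fun t ht ht₀ => ?_⟩
  rcases le_total t ξ with htξ | hξt
  · exact ht.1.not_ge (hαmax ⟨⟨hαmem.1.trans ht.1.le, htξ⟩, ht₀⟩)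
  · exact ht.2.not_ge (hβmin ⟨⟨hξt, ht.2.le.trans hβmem.2⟩, ht₀⟩)

lemma solvesNormalForm_sin (c α : ℝ) (S : Set ℝ) :
    SolvesNormalForm (fun _ => c ^ 2) (fun t => sin (c * (t - α))) S := by
  have harg (t : ℝ) : HasDerivAt (fun t => c * (t - α)) c t := by
    simpa using ((hasDerivAt_id t).sub_const α).const_mul c
  refine ⟨fun t => cos (c * (t - α)) * c, fun t _ => ⟨(harg t).sin, ?_⟩⟩
  convert! (harg t).cos.mul_const c using 1
  ring

lemma SolvesNormalForm.pi_div_lt_sub_of_lt_sq {K u : ℝ → ℝ} {c y z ξ : ℝ} (hc : 0 < c)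
    (hu : SolvesNormalForm K u (Icc y z)) (hK : ∀ t ∈ Icc y z, K t < c ^ 2)
    (hξ : ξ ∈ Icc y z) (hy : u y = 0) (hz : u z = 0) (hξ₀ : u ξ ≠ 0) : π / c < z - y := by
  obtain ⟨α, hα, β, hβ, hαβ, hα₀, hβ₀, hne⟩ :=
    exists_consecutive_zeros hu.continuousOn hξ hy hz hξ₀
  have hsub : Icc α β ⊆ Icc y z := Icc_subset_Icc hα.1 hβ.2
  obtain ⟨t, ht, hsin⟩ := (hu.mono hsub).exists_zero_of_lt (solvesNormalForm_sin c α _) hαβ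
    (fun t ht => hK t (hsub (Ioo_subset_Icc_self ht))) hα₀ hβ₀ hne
  have hpi : π ≤ c * (t - α) := by
    by_contra! hlt
    exact (sin_pos_of_pos_of_lt_pi (mul_pos hc (sub_pos.2 ht.1)) hlt).ne' hsin
  calc π / c ≤ t - α := (div_le_iff₀' hc).2 hpi
    _ < z - y := by linarith [ht.2, hα.1, hβ.2]

/-! ### The prolate equation -/

/-- The set of zeros of `ψ` in the open interval `(-1, 1)`. -/
def interiorZeros (ψ : ℝ → ℝ) : Set ℝ := {x | x ∈ Ioo (-1 : ℝ) 1 ∧ ψ x = 0}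

/-- The quasi-derivative `(1 - x²) ψ'` attached to the prolate differential operator. -/
noncomputable def quasiDeriv (ψ : ℝ → ℝ) (x : ℝ) : ℝ := (1 - x ^ 2) * deriv ψ x

/-- `ψ` solves the prolate equation `((1 - x²) ψ')' = -(χ - c² x²) ψ` on `(-1, 1)` and is
continuous up to the singular endpoints `±1`, which singles out the eigenfunctions. -/
structure IsProlateSolution (c χ : ℝ) (ψ : ℝ → ℝ) : Prop where
  continuousOn : ContinuousOn ψ (Icc (-1) 1)
  differentiableAt : ∀ x ∈ Ioo (-1 : ℝ) 1, DifferentiableAt ℝ ψ x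
  hasDerivAt_quasiDeriv : ∀ x ∈ Ioo (-1 : ℝ) 1,
    HasDerivAt (quasiDeriv ψ) (-((χ - c ^ 2 * x ^ 2) * ψ x)) x

lemma one_sub_sq_pos_of_mem_Ioo {x : ℝ} (hx : x ∈ Ioo (-1 : ℝ) 1) : 0 < 1 - x ^ 2 := by
  nlinarith [hx.1, hx.2]

lemma hasDerivAt_one_sub_sq (x : ℝ) : HasDerivAt (fun t => 1 - t ^ 2) (-(2 * x)) x := by
  simpa using (hasDerivAt_pow 2 x).const_sub 1

lemma hasDerivAt_sub_sq_mul_sq (c χ x : ℝ) :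
    HasDerivAt (fun t => χ - c ^ 2 * t ^ 2) (-(2 * c ^ 2 * x)) x := by
  convert! ((hasDerivAt_pow 2 x).const_mul (c ^ 2)).const_sub χ using 1
  ring

lemma IsPSWF.isProlateSolution {c χ : ℝ} {n : ℕ} {ψ : ℝ → ℝ} {lam : ℂ}
    (h : IsPSWF c n ψ χ lam) : IsProlateSolution c χ ψ := by
  obtain ⟨hcont, hdiff, hode, -⟩ := h
  refine ⟨hcont, fun x hx => (hdiff x hx).1, fun x hx => ?_⟩
  convert! (hasDerivAt_one_sub_sq x).mul (hdiff x hx).2.hasDerivAt using 1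
  linear_combination -hode x hx

lemma quasiDeriv_eq_zero {ψ : ℝ → ℝ} {x : ℝ} (h : deriv ψ x = 0) : quasiDeriv ψ x = 0 := by
  rw [quasiDeriv, h, mul_zero]

lemma quasiDeriv_neg (ψ : ℝ → ℝ) : quasiDeriv (-ψ) = -quasiDeriv ψ := by
  ext x
  simp [quasiDeriv, deriv.neg]

lemma quasiDeriv_comp_neg (ψ : ℝ → ℝ) (x : ℝ) :
    quasiDeriv (fun t => ψ (-t)) x = -quasiDeriv ψ (-x) := by
  simp [quasiDeriv, deriv_comp_neg]

namespace IsProlateSolution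

variable {c χ : ℝ} {ψ : ℝ → ℝ}

lemma neg (h : IsProlateSolution c χ ψ) : IsProlateSolution c χ (-ψ) where
  continuousOn := h.continuousOn.neg
  differentiableAt x hx := (h.differentiableAt x hx).neg
  hasDerivAt_quasiDeriv x hx := by
    rw [quasiDeriv_neg]
    simpa only [Pi.neg_apply, mul_neg] using (h.hasDerivAt_quasiDeriv x hx).neg

lemma comp_neg (h : IsProlateSolution c χ ψ) : IsProlateSolution c χ (fun x => ψ (-x)) where
  continuousOn := h.continuousOn.comp continuousOn_neg fun x hx => by
    constructor <;> linarith [hx.1, hx.2]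
  differentiableAt x hx :=
    (h.differentiableAt (-x) ⟨neg_lt_neg hx.2, by linarith [hx.1]⟩).comp x differentiableAt_id.neg
  hasDerivAt_quasiDeriv x hx := by
    have hneg := h.hasDerivAt_quasiDeriv (-x) ⟨neg_lt_neg hx.2, by linarith [hx.1]⟩
    rw [funext (quasiDeriv_comp_neg ψ)]
    convert! (hneg.comp x (hasDerivAt_neg x)).neg using 1
    ring

lemma hasDerivAt (h : IsProlateSolution c χ ψ) {x : ℝ} (hx : x ∈ Ioo (-1 : ℝ) 1) :
    HasDerivAt ψ (quasiDeriv ψ x / (1 - x ^ 2)) x := by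
  rw [quasiDeriv, mul_div_cancel_left₀ _ (one_sub_sq_pos_of_mem_Ioo hx).ne']
  exact (h.differentiableAt x hx).hasDerivAt

end IsProlateSolution

lemma tendsto_integral_nhdsLT {f : ℝ → ℝ} {a b : ℝ} (hab : a < b) (hf : ContinuousOn f (Icc a b)) :
    Tendsto (fun x => ∫ t in a..x, f t) (𝓝[<] b) (𝓝 (∫ t in a..b, f t)) := by
  have hprim := intervalIntegral.continuousOn_primitive_interval (μ := MeasureTheory.volume)
    (hf.integrableOn_Icc.mono_set (uIcc_of_le hab.le).subset) b right_mem_uIcc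
  rw [uIcc_of_le hab.le] at hprim
  exact hprim.mono_left (nhdsWithin_le_of_mem
    (mem_of_superset (Ioo_mem_nhdsLT hab) Ioo_subset_Icc_self))

lemma integral_le_of_le_deriv_of_tendsto {f Φ Φ' : ℝ → ℝ} {a b L : ℝ} (hab : a < b)
    (hf : ContinuousOn f (Icc a b)) (hΦ : ∀ t ∈ Ico a b, HasDerivAt Φ (Φ' t) t)
    (hle : ∀ t ∈ Ico a b, f t ≤ Φ' t) (hlim : Tendsto Φ (𝓝[<] b) (𝓝 L)) :
    ∫ t in a..b, f t ≤ L - Φ a := by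
  refine le_of_tendsto_of_tendsto (tendsto_integral_nhdsLT hab hf) (hlim.sub_const (Φ a)) ?_
  filter_upwards [Ioo_mem_nhdsLT hab] with x hx
  have hsub : Icc a x ⊆ Ico a b := Icc_subset_Ico_right hx.2
  exact intervalIntegral.integral_le_sub_of_hasDeriv_right_of_le hx.1.le
    (fun t ht => (hΦ t (hsub ht)).continuousAt.continuousWithinAt)
    (fun t ht => (hΦ t (hsub (Ioo_subset_Icc_self ht))).hasDerivWithinAt)
    (hf.mono (hsub.trans Ico_subset_Icc_self)).integrableOn_Icc
    (fun t ht => hle t (hsub (Ioo_subset_Icc_self ht)))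

lemma tendsto_atTop_of_div_one_sub_le_deriv {f f' : ℝ → ℝ} {a η : ℝ} (ha : a < 1) (hη : 0 < η)
    (hf : ∀ t ∈ Ioo a 1, HasDerivAt f (f' t) t) (hf' : ∀ t ∈ Ioo a 1, η / (1 - t) ≤ f' t) :
    Tendsto f (𝓝[<] 1) atTop := by
  have hderiv : ∀ t ∈ Ioo a 1,
      HasDerivAt (fun t => f t + η * log (1 - t)) (f' t - η / (1 - t)) t := by
    intro t ht
    have hlog := ((hasDerivAt_id t).const_sub 1).log (sub_pos.2 ht.2).ne'
    convert! (hf t ht).add (hlog.const_mul η) using 1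
    simp only [id]
    ring
  have hmono : MonotoneOn (fun t => f t + η * log (1 - t)) (Ioo a 1) := by
    refine monotoneOn_of_hasDerivWithinAt_nonneg (convex_Ioo a 1)
      (fun t ht => (hderiv t ht).continuousAt.continuousWithinAt)
      (fun t ht => (hderiv t (interior_subset ht)).hasDerivWithinAt) fun t ht => ?_
    exact sub_nonneg.2 (hf' t (interior_subset ht))
  have hsub : Tendsto (fun t : ℝ => 1 - t) (𝓝[<] 1) (𝓝[>] 0) := by
    refine tendsto_nhdsWithin_iff.2 ⟨?_, eventually_nhdsWithin_of_forall fun t (ht : t < 1) => ?_⟩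
    · exact ((continuous_const.sub continuous_id).tendsto' _ _ (sub_self _)).mono_left
        nhdsWithin_le_nhds
    · exact sub_pos.2 ht
  obtain ⟨b, hab, hb⟩ := exists_between ha
  have hlim : Tendsto (fun t => (f b + η * log (1 - b)) + η * -log (1 - t)) (𝓝[<] 1) atTop :=
    tendsto_atTop_add_const_left _ _ <| (tendsto_neg_atBot_atTop.comp
      (tendsto_log_nhdsGT_zero.comp hsub)).const_mul_atTop hη
  refine tendsto_atTop_mono' _ ?_ hlim
  filter_upwards [Ioo_mem_nhdsLT hb] with t ht
  have := hmono ⟨hab, hb⟩ ⟨hab.trans ht.1, ht.2⟩ ht.1.le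
  dsimp only at this
  linarith

namespace IsProlateSolution

variable {c χ : ℝ} {φ ψ : ℝ → ℝ}

lemma tendsto_nhdsLT_one (h : IsProlateSolution c χ ψ) : Tendsto ψ (𝓝[<] 1) (𝓝 (ψ 1)) :=
  (h.continuousOn 1 (by norm_num)).mono_left
    (nhdsWithin_le_of_mem (mem_of_superset (Ioo_mem_nhdsLT (by norm_num)) Ioo_subset_Icc_self))

lemma exists_tendsto_quasiDeriv (h : IsProlateSolution c χ ψ) :
    ∃ L, Tendsto (quasiDeriv ψ) (𝓝[<] 1) (𝓝 L) := by
  have hcont : ContinuousOn (fun x => -((χ - c ^ 2 * x ^ 2) * ψ x)) (Icc 0 1) :=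
    (ContinuousOn.mul (by fun_prop) (h.continuousOn.mono (Icc_subset_Icc_left (by norm_num)))).neg
  refine ⟨_, ((tendsto_integral_nhdsLT one_pos hcont).add_const (quasiDeriv ψ 0)).congr' ?_⟩
  filter_upwards [Ioo_mem_nhdsLT one_pos] with x hx
  have hsub : uIcc 0 x ⊆ Ico 0 1 := by
    rw [uIcc_of_le hx.1.le]
    exact Icc_subset_Ico_right hx.2
  rw [← eq_sub_iff_add_eq]
  exact intervalIntegral.integral_eq_sub_of_hasDerivAt
    (fun t ht => h.hasDerivAt_quasiDeriv t ⟨by linarith [(hsub ht).1], (hsub ht).2⟩)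
    (hcont.mono (hsub.trans Ico_subset_Icc_self)).intervalIntegrable

-- A positive limit of `(1 - x²) ψ'` would make `ψ` blow up logarithmically at `1`.
lemma not_tendsto_quasiDeriv_of_pos (h : IsProlateSolution c χ ψ) {L : ℝ} (hL : 0 < L) :
    ¬ Tendsto (quasiDeriv ψ) (𝓝[<] 1) (𝓝 L) := by
  intro hlim
  obtain ⟨a, ha, haL⟩ : ∃ a ∈ Ico (0 : ℝ) 1, ∀ t ∈ Ioo a 1, L / 2 < quasiDeriv ψ t :=
    (mem_nhdsLT_iff_exists_mem_Ico_Ioo_subset one_pos).1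
      (hlim.eventually_const_lt (half_lt_self hL))
  have hmem : ∀ t ∈ Ioo a 1, t ∈ Ioo (-1 : ℝ) 1 := fun t ht => ⟨by linarith [ha.1, ht.1], ht.2⟩
  refine not_tendsto_nhds_of_tendsto_atTop ?_ (ψ 1) h.tendsto_nhdsLT_one
  refine tendsto_atTop_of_div_one_sub_le_deriv ha.2 (η := L / 4) (by positivity)
    (fun t ht => h.hasDerivAt (hmem t ht)) fun t ht => ?_
  have hsub : 0 < 1 - t := sub_pos.2 ht.2
  rw [div_le_div_iff₀ hsub (one_sub_sq_pos_of_mem_Ioo (hmem t ht))]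
  have hfactor : L / 4 * (1 + t) ≤ quasiDeriv ψ t := by nlinarith [haL t ht, ht.2]
  calc L / 4 * (1 - t ^ 2) = L / 4 * (1 + t) * (1 - t) := by ring
    _ ≤ quasiDeriv ψ t * (1 - t) := by gcongr

lemma tendsto_quasiDeriv (h : IsProlateSolution c χ ψ) :
    Tendsto (quasiDeriv ψ) (𝓝[<] 1) (𝓝 0) := by
  obtain ⟨L, hL⟩ := h.exists_tendsto_quasiDeriv
  rcases lt_trichotomy L 0 with hneg | rfl | hpos
  · refine absurd ?_ (h.neg.not_tendsto_quasiDeriv_of_pos (neg_pos.2 hneg))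
    rw [quasiDeriv_neg]
    exact hL.neg
  · exact hL
  · exact absurd hL (h.not_tendsto_quasiDeriv_of_pos hpos)

lemma tendsto_mul_quasiDeriv (hφ : IsProlateSolution c χ φ) (hψ : IsProlateSolution c χ ψ) :
    Tendsto (fun x => φ x * quasiDeriv ψ x) (𝓝[<] 1) (𝓝 0) := by
  simpa only [mul_zero] using hφ.tendsto_nhdsLT_one.mul hψ.tendsto_quasiDeriv

-- The Wronskian is constant, and it vanishes at the endpoint `1`.
lemma mul_quasiDeriv_eq (hφ : IsProlateSolution c χ φ) (hψ : IsProlateSolution c χ ψ) {x : ℝ}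
    (hx : x ∈ Ioo (-1 : ℝ) 1) : φ x * quasiDeriv ψ x = ψ x * quasiDeriv φ x := by
  have hderiv : ∀ t ∈ Ioo (-1 : ℝ) 1,
      HasDerivAt (fun t => φ t * quasiDeriv ψ t - ψ t * quasiDeriv φ t) 0 t := by
    intro t ht
    convert! ((hφ.hasDerivAt ht).mul (hψ.hasDerivAt_quasiDeriv t ht)).sub
      ((hψ.hasDerivAt ht).mul (hφ.hasDerivAt_quasiDeriv t ht)) using 1
    ring
  have hconst := (tendsto_const_nhds (x := φ x * quasiDeriv ψ x - ψ x * quasiDeriv φ x)).congr' <|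
    eventually_of_mem (Ioo_mem_nhdsLT (by norm_num : (-1 : ℝ) < 1)) fun t ht =>
      isOpen_Ioo.is_const_of_deriv_eq_zero isPreconnected_Ioo
        (fun s hs => (hderiv s hs).differentiableAt.differentiableWithinAt)
        (fun s hs => (hderiv s hs).deriv) hx ht
  have hlim := (hφ.tendsto_mul_quasiDeriv hψ).sub (hψ.tendsto_mul_quasiDeriv hφ)
  rw [sub_zero] at hlim
  exact sub_eq_zero.1 (tendsto_nhds_unique hconst hlim)

lemma quasiDeriv_zero (h : IsProlateSolution c χ ψ) (h₀ : ψ 0 ≠ 0) : quasiDeriv ψ 0 = 0 := by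
  have hW := h.comp_neg.mul_quasiDeriv_eq h (x := 0) (by norm_num)
  rw [quasiDeriv_comp_neg, neg_zero] at hW
  have : ψ 0 * quasiDeriv ψ 0 = 0 := by linarith
  exact (mul_eq_zero.1 this).resolve_left h₀

end IsProlateSolution

/-! ### The energy bound -/

/-- The energy `p q ψ² + (p ψ')²` of a solution of the prolate equation `(p ψ')' = -q ψ`, where
`p = 1 - t²` and `q = χ - c² t²`. -/
noncomputable def prolateEnergy (c χ : ℝ) (ψ : ℝ → ℝ) (t : ℝ) : ℝ :=
  (1 - t ^ 2) * (χ - c ^ 2 * t ^ 2) * ψ t ^ 2 + quasiDeriv ψ t ^ 2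

namespace IsProlateSolution

variable {c χ : ℝ} {ψ : ℝ → ℝ}

lemma hasDerivAt_prolateEnergy (h : IsProlateSolution c χ ψ) {t : ℝ} (ht : t ∈ Ioo (-1 : ℝ) 1) :
    HasDerivAt (prolateEnergy c χ ψ)
      (-(2 * t * ((χ + c ^ 2 - 2 * c ^ 2 * t ^ 2) * ψ t ^ 2))) t := by
  have hp := (one_sub_sq_pos_of_mem_Ioo ht).ne'
  convert! (((hasDerivAt_one_sub_sq t).mul (hasDerivAt_sub_sq_mul_sq c χ t)).mul
    ((h.hasDerivAt ht).pow 2)).add ((h.hasDerivAt_quasiDeriv t ht).pow 2) using 1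
  simp only [Pi.mul_apply, Pi.pow_apply]
  field

lemma prolateEnergy_le (h : IsProlateSolution c χ ψ) (hχ : c ^ 2 ≤ χ) (h₀ : quasiDeriv ψ 0 = 0)
    {t : ℝ} (ht : t ∈ Ico (0 : ℝ) 1) : prolateEnergy c χ ψ t ≤ χ * ψ 0 ^ 2 := by
  have hderiv {x : ℝ} (hx : x ∈ Ico (0 : ℝ) 1) :=
    h.hasDerivAt_prolateEnergy (t := x) ⟨by linarith [hx.1], hx.2⟩
  have hanti : AntitoneOn (prolateEnergy c χ ψ) (Ico 0 1) := by
    refine antitoneOn_of_hasDerivWithinAt_nonpos (convex_Ico _ _)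
      (fun x hx => (hderiv hx).continuousAt.continuousWithinAt)
      (fun x hx => (hderiv (interior_subset hx)).hasDerivWithinAt) fun x hx => ?_
    have hx' := interior_subset hx
    have hw : 0 ≤ χ + c ^ 2 - 2 * c ^ 2 * x ^ 2 := by
      nlinarith [mul_nonneg (sq_nonneg c) (by nlinarith [hx'.1, hx'.2] : 0 ≤ 1 - x ^ 2)]
    exact neg_nonpos.2 (mul_nonneg (by linarith [hx'.1]) (mul_nonneg hw (sq_nonneg _)))
  simpa [prolateEnergy, h₀] using hanti ⟨le_rfl, one_pos⟩ ht ht.1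

lemma tendsto_prolateEnergy (h : IsProlateSolution c χ ψ) :
    Tendsto (prolateEnergy c χ ψ) (𝓝[<] 1) (𝓝 0) := by
  have hpq : Tendsto (fun t : ℝ => (1 - t ^ 2) * (χ - c ^ 2 * t ^ 2)) (𝓝[<] 1) (𝓝 0) :=
    (Continuous.tendsto' (by fun_prop) 1 0 (by norm_num)).mono_left nhdsWithin_le_nhds
  have hlim := (hpq.mul (h.tendsto_nhdsLT_one.pow 2)).add (h.tendsto_quasiDeriv.pow 2)
  rwa [zero_mul, zero_pow two_ne_zero, add_zero] at hlim

lemma weight_mul_sq_le (h : IsProlateSolution c χ ψ) (hχ : c ^ 2 ≤ χ) (h₀ : quasiDeriv ψ 0 = 0)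
    {t : ℝ} (ht : t ∈ Ico (0 : ℝ) 1) : (χ + c ^ 2 - 2 * c ^ 2 * t ^ 2) * ψ t ^ 2 ≤
      2 * t * ((χ + c ^ 2 - 2 * c ^ 2 * t ^ 2) * ψ t ^ 2) + 2 * (χ * ψ 0 ^ 2) := by
  have hp : 0 ≤ 1 - t ^ 2 := by nlinarith [ht.1, ht.2]
  have hcp : 0 ≤ c ^ 2 * (1 - t ^ 2) := by positivity
  have hw : 0 ≤ χ + c ^ 2 - 2 * c ^ 2 * t ^ 2 := by linarith
  have hE := h.prolateEnergy_le hχ h₀ ht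
  rcases le_total (1 / 2) t with hhalf | hhalf
  · have hχ₀ : 0 ≤ χ * ψ 0 ^ 2 := mul_nonneg ((sq_nonneg c).trans hχ) (sq_nonneg _)
    nlinarith [mul_nonneg hw (sq_nonneg (ψ t))]
  · have hcoef : (1 - 2 * t) * (χ + c ^ 2 - 2 * c ^ 2 * t ^ 2) ≤
        (1 - t ^ 2) * (2 * (χ - c ^ 2 * t ^ 2)) :=
      mul_le_mul (by nlinarith [ht.1]) (by linarith) hw hp
    rw [prolateEnergy] at hE
    nlinarith [mul_le_mul_of_nonneg_right hcoef (sq_nonneg (ψ t)), sq_nonneg (quasiDeriv ψ t)]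

lemma integral_weight_mul_sq_le (h : IsProlateSolution c χ ψ) (hχ : c ^ 2 ≤ χ)
    (h₀ : quasiDeriv ψ 0 = 0) :
    ∫ t in (0 : ℝ)..1, (χ + c ^ 2 - 2 * c ^ 2 * t ^ 2) * ψ t ^ 2 ≤ 3 * χ * ψ 0 ^ 2 := by
  have hcont : ContinuousOn ψ (Icc 0 1) := h.continuousOn.mono (Icc_subset_Icc_left (by norm_num))
  have hlim : Tendsto (fun t => -prolateEnergy c χ ψ t + t * (2 * (χ * ψ 0 ^ 2))) (𝓝[<] 1)
      (𝓝 (-0 + 1 * (2 * (χ * ψ 0 ^ 2)))) :=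
    h.tendsto_prolateEnergy.neg.add ((tendsto_id.mono_left nhdsWithin_le_nhds).mul_const _)
  have hint := integral_le_of_le_deriv_of_tendsto
    (Φ' := fun t => 2 * t * ((χ + c ^ 2 - 2 * c ^ 2 * t ^ 2) * ψ t ^ 2) + 2 * (χ * ψ 0 ^ 2))
    one_pos (by fun_prop) (fun t ht => ?_) (fun t ht => h.weight_mul_sq_le hχ h₀ ht) hlim
  · simp only [prolateEnergy, h₀] at hint
    linarith
  · convert! (h.hasDerivAt_prolateEnergy ⟨by linarith [ht.1], ht.2⟩).neg.add
      ((hasDerivAt_id t).mul_const (2 * (χ * ψ 0 ^ 2))) using 1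
    ring

-- Integrate the derivative of `-c (1 - t) ψ² + (1 - t²) ψ ψ'`.
lemma integral_sub_weight_mul_sq_le (h : IsProlateSolution c χ ψ)
    (h₀ : quasiDeriv ψ 0 = 0) :
    ∫ t in (0 : ℝ)..1, (c - (χ + c ^ 2 - 2 * c ^ 2 * t ^ 2)) * ψ t ^ 2 ≤ c * ψ 0 ^ 2 := by
  have hcont : ContinuousOn ψ (Icc 0 1) := h.continuousOn.mono (Icc_subset_Icc_left (by norm_num))
  have hlim : Tendsto (fun t => c * (t - 1) * ψ t ^ 2 + ψ t * quasiDeriv ψ t) (𝓝[<] 1)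
      (𝓝 (0 * ψ 1 ^ 2 + 0)) :=
    (((Continuous.tendsto' (by fun_prop) 1 0 (by ring)).mono_left nhdsWithin_le_nhds).mul
      (h.tendsto_nhdsLT_one.pow 2)).add (h.tendsto_mul_quasiDeriv h)
  have hint := integral_le_of_le_deriv_of_tendsto
    (f := fun t => (c - (χ + c ^ 2 - 2 * c ^ 2 * t ^ 2)) * ψ t ^ 2)
    (Φ' := fun t => c * ψ t ^ 2 + 2 * c * (t - 1) * ψ t * deriv ψ t + (1 - t ^ 2) * deriv ψ t ^ 2
      - (χ - c ^ 2 * t ^ 2) * ψ t ^ 2)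
    one_pos (by fun_prop) (fun t ht => ?_) (fun t ht => ?_) hlim
  · simp only [h₀] at hint
    linarith
  · have hmem : t ∈ Ioo (-1 : ℝ) 1 := ⟨by linarith [ht.1], ht.2⟩
    have hψ := (h.differentiableAt t hmem).hasDerivAt
    convert! ((((hasDerivAt_id t).sub_const 1).const_mul c).mul (hψ.pow 2)).add
      (hψ.mul (h.hasDerivAt_quasiDeriv t hmem)) using 1
    simp only [quasiDeriv, id, Pi.pow_apply]
    ring
  · have hsq : 0 ≤ (1 - t) * (deriv ψ t - c * ψ t) ^ 2 :=
      mul_nonneg (sub_nonneg.2 ht.2.le) (sq_nonneg _)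
    have hrest : 0 ≤ (1 - t) * t * (deriv ψ t ^ 2 + c ^ 2 * ψ t ^ 2) :=
      mul_nonneg (mul_nonneg (sub_nonneg.2 ht.2.le) ht.1) (by positivity)
    linarith

lemma integral_zero_one_sq_le (h : IsProlateSolution c χ ψ) (hc : 0 < c) (hχ : c ^ 2 ≤ χ)
    (h₀ : quasiDeriv ψ 0 = 0) : ∫ t in (0 : ℝ)..1, ψ t ^ 2 ≤ ψ 0 ^ 2 * (1 + 3 * χ / c) := by
  have hcont : ContinuousOn ψ (uIcc 0 1) := by
    rw [uIcc_of_le zero_le_one]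
    exact h.continuousOn.mono (Icc_subset_Icc_left (by norm_num))
  have hadd : c * ∫ t in (0 : ℝ)..1, ψ t ^ 2 =
      (∫ t in (0 : ℝ)..1, (χ + c ^ 2 - 2 * c ^ 2 * t ^ 2) * ψ t ^ 2) +
        ∫ t in (0 : ℝ)..1, (c - (χ + c ^ 2 - 2 * c ^ 2 * t ^ 2)) * ψ t ^ 2 := by
    rw [← intervalIntegral.integral_const_mul, ← intervalIntegral.integral_add
      (ContinuousOn.intervalIntegrable (by fun_prop))
      (ContinuousOn.intervalIntegrable (by fun_prop))]
    congr! 2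
    ring
  have hle : c * ∫ t in (0 : ℝ)..1, ψ t ^ 2 ≤ c * (ψ 0 ^ 2 * (1 + 3 * χ / c)) := by
    rw [hadd, show c * (ψ 0 ^ 2 * (1 + 3 * χ / c)) = 3 * χ * ψ 0 ^ 2 + c * ψ 0 ^ 2 by field]
    exact add_le_add (h.integral_weight_mul_sq_le hχ h₀) (h.integral_sub_weight_mul_sq_le h₀)
  exact le_of_mul_le_mul_left hle hc

theorem integral_sq_le (h : IsProlateSolution c χ ψ) (hc : 0 < c) (hχ : c ^ 2 ≤ χ)
    (h₀ : ψ 0 ≠ 0) : ∫ t in (-1 : ℝ)..1, ψ t ^ 2 ≤ 2 * ψ 0 ^ 2 * (1 + 3 * χ / c) := by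
  have hcont : ContinuousOn (fun t => ψ t ^ 2) (Icc (-1) 1) := h.continuousOn.pow 2
  have hright := h.integral_zero_one_sq_le hc hχ (h.quasiDeriv_zero h₀)
  have hleft := h.comp_neg.integral_zero_one_sq_le hc hχ
    (by rw [quasiDeriv_comp_neg, neg_zero, h.quasiDeriv_zero h₀, neg_zero])
  rw [intervalIntegral.integral_comp_neg (fun t => ψ t ^ 2), neg_zero] at hleft
  rw [← intervalIntegral.integral_add_adjacent_intervals (b := 0)
    (hcont.mono (by rw [uIcc_of_le] <;> norm_num [Icc_subset_Icc])).intervalIntegrable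
    (hcont.mono (by rw [uIcc_of_le] <;> norm_num [Icc_subset_Icc])).intervalIntegrable]
  linarith

end IsProlateSolution

/-! ### Counting zeros when `χ < c²` -/

namespace IsProlateSolution

variable {c χ : ℝ} {ψ : ℝ → ℝ}

-- The quasi-derivative `g` solves `(g' / q)' = -g / p` with `p = 1 - t²` and `q = χ - c² t²`.
lemma solvesNormalForm_quasiDeriv (h : IsProlateSolution c χ ψ) {S : Set ℝ}
    (hS : S ⊆ Ioo (-1) 1) (hq : ∀ t ∈ S, 0 < χ - c ^ 2 * t ^ 2) :
    SolvesNormalForm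
      (fun t => (χ - c ^ 2 * t ^ 2) / (1 - t ^ 2) - (c ^ 2 / (χ - c ^ 2 * t ^ 2) +
        3 * c ^ 4 * t ^ 2 / (χ - c ^ 2 * t ^ 2) ^ 2))
      (fun t => (√(χ - c ^ 2 * t ^ 2))⁻¹ * quasiDeriv ψ t) S := by
  have hsq : ∀ t ∈ S, √(χ - c ^ 2 * t ^ 2) ^ 2 = χ - c ^ 2 * t ^ 2 := fun t ht =>
    sq_sqrt (hq t ht).le
  have hne : ∀ t ∈ S, √(χ - c ^ 2 * t ^ 2) ≠ 0 := fun t ht => (sqrt_pos.2 (hq t ht)).ne'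
  have hs : ∀ t ∈ S, HasDerivAt (fun t => (√(χ - c ^ 2 * t ^ 2))⁻¹)
      (c ^ 2 * t * (√(χ - c ^ 2 * t ^ 2))⁻¹ ^ 3) t := by
    intro t ht
    have := hne t ht
    convert! ((hasDerivAt_sub_sq_mul_sq c χ t).sqrt (hq t ht).ne').inv (hne t ht) using 1
    field
  have hs' : ∀ t ∈ S, HasDerivAt (fun t => c ^ 2 * t * (√(χ - c ^ 2 * t ^ 2))⁻¹ ^ 3)
      (c ^ 2 * (√(χ - c ^ 2 * t ^ 2))⁻¹ ^ 3 +
        3 * c ^ 4 * t ^ 2 * (√(χ - c ^ 2 * t ^ 2))⁻¹ ^ 5) t := by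
    intro t ht
    convert! ((hasDerivAt_id t).const_mul (c ^ 2)).mul ((hs t ht).pow 3) using 1
    simp only [id, Pi.pow_apply]
    ring
  refine (solvesNormalForm_mul (g := fun t => -ψ t) (Q := fun t => 1 / (1 - t ^ 2))
    (fun t ht => inv_ne_zero (hne t ht)) hs hs' (fun t ht => ?_) (fun t ht => ?_)).congr
    fun t ht => ?_
  · convert! h.hasDerivAt_quasiDeriv t (hS ht) using 1
    rw [inv_pow, hsq t ht, div_inv_eq_mul]
    ring
  · convert! (h.hasDerivAt (hS ht)).neg using 1
    ring
  · have hp := one_sub_sq_pos_of_mem_Ioo (hS ht)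
    have hsq := hsq t ht
    have hne := hne t ht
    dsimp only
    generalize √(χ - c ^ 2 * t ^ 2) = r at hsq hne ⊢
    rw [← hsq]
    field

lemma exists_quasiDeriv_ne_zero (h : IsProlateSolution c χ ψ) (hfin : (interiorZeros ψ).Finite)
    {y z : ℝ} (hyz : y < z) (hmem : Ioo y z ⊆ Ioo (-1) 1)
    (hq : ∀ t ∈ Ioo y z, χ - c ^ 2 * t ^ 2 ≠ 0) : ∃ t ∈ Ioo y z, quasiDeriv ψ t ≠ 0 := by
  by_contra! hzero
  refine Ioo_infinite hyz (hfin.subset fun t ht => ⟨hmem ht, ?_⟩)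
  have hconst : quasiDeriv ψ =ᶠ[𝓝 t] fun _ => 0 :=
    eventually_of_mem (Ioo_mem_nhds ht.1 ht.2) hzero
  have hderiv := (h.hasDerivAt_quasiDeriv t (hmem ht)).unique
    (hconst.hasDerivAt_iff.2 (hasDerivAt_const t 0))
  exact (mul_eq_zero.1 (neg_eq_zero.1 hderiv)).resolve_left (hq t ht)

lemma pi_div_lt_sub_of_quasiDeriv_eq_zero (h : IsProlateSolution c χ ψ) (hc : 0 < c)
    (hχ : χ < c ^ 2) (hfin : (interiorZeros ψ).Finite) {y z : ℝ} (hyz : y < z)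
    (hmem : Icc y z ⊆ Ioo (-1) 1) (hq : ∀ t ∈ Icc y z, 0 < χ - c ^ 2 * t ^ 2)
    (hy : quasiDeriv ψ y = 0) (hz : quasiDeriv ψ z = 0) : π / c < z - y := by
  obtain ⟨ξ, hξ, hξ₀⟩ := h.exists_quasiDeriv_ne_zero hfin hyz (Ioo_subset_Icc_self.trans hmem)
    fun t ht => (hq t (Ioo_subset_Icc_self ht)).ne'
  replace hξ := Ioo_subset_Icc_self hξ
  refine (h.solvesNormalForm_quasiDeriv hmem hq).pi_div_lt_sub_of_lt_sq hc (fun t ht => ?_) hξ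
    (by rw [hy, mul_zero]) (by rw [hz, mul_zero])
    (mul_ne_zero (inv_ne_zero (sqrt_pos.2 (hq ξ hξ)).ne') hξ₀)
  have hqt := hq t ht
  have hlt : (χ - c ^ 2 * t ^ 2) / (1 - t ^ 2) < c ^ 2 := by
    rw [div_lt_iff₀ (one_sub_sq_pos_of_mem_Ioo (hmem ht))]
    linarith
  have hpot : 0 < c ^ 2 / (χ - c ^ 2 * t ^ 2) + 3 * c ^ 4 * t ^ 2 / (χ - c ^ 2 * t ^ 2) ^ 2 := by
    positivity
  linarith

lemma quasiDeriv_neg_of_forall_pos (h : IsProlateSolution c χ ψ) {t : ℝ} (ht : t ∈ Ioo (-1 : ℝ) 1)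
    (hq : ∀ s ∈ Ioo t 1, χ - c ^ 2 * s ^ 2 < 0) (hpos : ∀ s ∈ Ioo t 1, 0 < ψ s) :
    quasiDeriv ψ t < 0 := by
  have hderiv {s : ℝ} (hs : s ∈ Ico t 1) := h.hasDerivAt_quasiDeriv s ⟨ht.1.trans_le hs.1, hs.2⟩
  have hmono : StrictMonoOn (quasiDeriv ψ) (Ico t 1) := by
    refine strictMonoOn_of_hasDerivWithinAt_pos (convex_Ico t 1)
      (fun s hs => (hderiv hs).continuousAt.continuousWithinAt)
      (fun s hs => (hderiv (interior_subset hs)).hasDerivWithinAt) fun s hs => ?_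
    rw [interior_Ico] at hs
    exact neg_pos.2 (mul_neg_of_neg_of_pos (hq s hs) (hpos s hs))
  obtain ⟨m, htm, hm⟩ := exists_between ht.2
  refine (hmono ⟨le_rfl, ht.2⟩ ⟨htm.le, hm⟩ htm).trans_le (ge_of_tendsto h.tendsto_quasiDeriv ?_)
  filter_upwards [Ioo_mem_nhdsLT hm] with s hs
  exact (hmono ⟨htm.le, hm⟩ ⟨htm.le.trans hs.1.le, hs.2⟩ hs.1).le

lemma strictAntiOn_of_quasiDeriv_neg (h : IsProlateSolution c χ ψ) {a b : ℝ}
    (hmem : Icc a b ⊆ Icc (-1) 1) (hneg : ∀ t ∈ Ioo a b, quasiDeriv ψ t < 0) :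
    StrictAntiOn ψ (Icc a b) := by
  have hIoo : Ioo a b ⊆ Ioo (-1) 1 := by
    simpa only [interior_Icc] using interior_mono hmem
  refine strictAntiOn_of_hasDerivWithinAt_neg (convex_Icc a b) (h.continuousOn.mono hmem)
    (f' := fun t => quasiDeriv ψ t / (1 - t ^ 2)) (fun t ht => ?_) fun t ht => ?_ <;>
    rw [interior_Icc] at ht
  · exact (h.hasDerivAt (hIoo ht)).hasDerivWithinAt
  · exact div_neg_of_neg_of_pos (hneg t ht) (one_sub_sq_pos_of_mem_Ioo (hIoo ht))

lemma exists_lt_of_forall_pos (h : IsProlateSolution c χ ψ) (hχ : χ < c ^ 2) {x : ℝ}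
    (hx : x ∈ Ioo (-1 : ℝ) 1) (hpos : ∀ t ∈ Ioo x 1, 0 < ψ t) : ∃ t ∈ Ioo x 1, ψ 1 < ψ t := by
  have hev : ∀ᶠ t in 𝓝[<] 1, χ - c ^ 2 * t ^ 2 < 0 :=
    ((Continuous.tendsto (by fun_prop) 1).mono_left nhdsWithin_le_nhds).eventually_lt_const
      (by linarith)
  obtain ⟨b, hb, hbq⟩ := (mem_nhdsLT_iff_exists_mem_Ico_Ioo_subset hx.2).1 hev
  obtain ⟨m, hbm, hm⟩ := exists_between hb.2
  have hxm : x < m := hb.1.trans_lt hbm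
  refine ⟨m, ⟨hxm, hm⟩, h.strictAntiOn_of_quasiDeriv_neg (a := m) (b := 1)
    (Icc_subset_Icc_left (hx.1.trans hxm).le) (fun t ht => ?_) (left_mem_Icc.2 hm.le)
    (right_mem_Icc.2 hm.le) hm⟩
  exact h.quasiDeriv_neg_of_forall_pos ⟨hx.1.trans (hxm.trans ht.1), ht.2⟩
    (fun s hs => hbq ⟨hbm.trans (ht.1.trans hs.1), hs.2⟩)
    fun s hs => hpos s ⟨hxm.trans (ht.1.trans hs.1), hs.2⟩

lemma potential_pos_of_quasiDeriv_eq_zero (h : IsProlateSolution c χ ψ) (hc : 0 < c) {x y : ℝ}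
    (hx : x ∈ Ioo (-1 : ℝ) 1) (hx₀ : ψ x = 0) (hpos : ∀ t ∈ Ioo x 1, 0 < ψ t)
    (hy : y ∈ Ioo x 1) (hy₀ : quasiDeriv ψ y = 0) : 0 < χ - c ^ 2 * y ^ 2 := by
  by_contra! hqy
  rcases le_or_gt 0 y with hy_nonneg | hy_neg
  · refine (h.quasiDeriv_neg_of_forall_pos ⟨hx.1.trans hy.1, hy.2⟩ (fun s hs => ?_) fun s hs =>
      hpos s ⟨hy.1.trans hs.1, hs.2⟩).ne hy₀
    nlinarith [mul_pos (pow_pos hc 2) (by nlinarith [hs.1] : 0 < s ^ 2 - y ^ 2)]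
  · have hmem : Icc x y ⊆ Ioo (-1) 1 := Icc_subset_Ioo hx.1 hy.2
    have hmono : StrictMonoOn (quasiDeriv ψ) (Icc x y) := by
      refine strictMonoOn_of_hasDerivWithinAt_pos (convex_Icc x y)
        (fun s hs => (h.hasDerivAt_quasiDeriv s (hmem hs)).continuousAt.continuousWithinAt)
        (fun s hs => (h.hasDerivAt_quasiDeriv s
          (hmem (interior_subset hs))).hasDerivWithinAt) fun s hs => ?_
      rw [interior_Icc] at hs
      refine neg_pos.2 (mul_neg_of_neg_of_pos ?_ (hpos s ⟨hs.1, hs.2.trans hy.2⟩))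
      nlinarith [mul_pos (pow_pos hc 2) (by nlinarith [hs.2] : 0 < s ^ 2 - y ^ 2)]
    have hyx : ψ y < ψ x := h.strictAntiOn_of_quasiDeriv_neg (hmem.trans Ioo_subset_Icc_self)
      (fun t ht => (hmono (Ioo_subset_Icc_self ht) (right_mem_Icc.2 hy.1.le) ht.2).trans_eq hy₀)
      (left_mem_Icc.2 hy.1.le) (right_mem_Icc.2 hy.1.le) hy.1
    exact (hpos y hy).not_gt (hx₀ ▸ hyx)

lemma exists_quasiDeriv_eq_zero_right (h : IsProlateSolution c χ ψ) (hc : 0 < c) (hχ : χ < c ^ 2)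
    {x : ℝ} (hx : x ∈ Ioo (-1 : ℝ) 1) (hx₀ : ψ x = 0) (hne : ∀ t ∈ Ioo x 1, ψ t ≠ 0) :
    ∃ y ∈ Ioo x 1, quasiDeriv ψ y = 0 ∧ 0 < χ - c ^ 2 * y ^ 2 := by
  have hcont : ContinuousOn ψ (Icc x 1) := h.continuousOn.mono (Icc_subset_Icc_left hx.1.le)
  wlog hpos : ∀ t ∈ Ioo x 1, 0 < ψ t generalizing ψ
  · have hneg := (forall_pos_or_forall_neg_of_ne_zero isPreconnected_Ioo
      (hcont.mono Ioo_subset_Icc_self) hne).resolve_left hpos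
    obtain ⟨y, hy, hy₀, hqy⟩ := this h.neg (by simp [hx₀]) (fun t ht => neg_ne_zero.2 (hne t ht))
      hcont.neg fun t ht => neg_pos.2 (hneg t ht)
    exact ⟨y, hy, by simpa [quasiDeriv_neg] using hy₀, hqy⟩
  obtain ⟨y, hy, hmax⟩ := isCompact_Icc.exists_isMaxOn ⟨x, left_mem_Icc.2 hx.2.le⟩ hcont
  obtain ⟨t, ht, hψt⟩ := h.exists_lt_of_forall_pos hχ hx hpos
  have hty : ψ t ≤ ψ y := hmax (Ioo_subset_Icc_self ht)
  have hy_ne_left : x ≠ y := by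
    rintro rfl
    linarith [hpos t ht]
  have hy_ne_right : y ≠ 1 := by
    rintro rfl
    linarith
  have hyIoo : y ∈ Ioo x 1 := ⟨hy.1.lt_of_ne hy_ne_left, hy.2.lt_of_ne hy_ne_right⟩
  have hy₀ : quasiDeriv ψ y = 0 := quasiDeriv_eq_zero
    (hmax.isLocalMax (Icc_mem_nhds hyIoo.1 hyIoo.2)).deriv_eq_zero
  exact ⟨y, hyIoo, hy₀, h.potential_pos_of_quasiDeriv_eq_zero hc hx hx₀ hpos hyIoo hy₀⟩

lemma exists_quasiDeriv_eq_zero_left (h : IsProlateSolution c χ ψ) (hc : 0 < c) (hχ : χ < c ^ 2)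
    {x : ℝ} (hx : x ∈ Ioo (-1 : ℝ) 1) (hx₀ : ψ x = 0) (hne : ∀ t ∈ Ioo (-1) x, ψ t ≠ 0) :
    ∃ y ∈ Ioo (-1) x, quasiDeriv ψ y = 0 ∧ 0 < χ - c ^ 2 * y ^ 2 := by
  obtain ⟨y, hy, hy₀, hqy⟩ := h.comp_neg.exists_quasiDeriv_eq_zero_right hc hχ (x := -x)
    ⟨neg_lt_neg hx.2, by linarith [hx.1]⟩ (by rwa [neg_neg])
    fun t ht => hne (-t) ⟨neg_lt_neg ht.2, by linarith [ht.1]⟩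
  rw [quasiDeriv_comp_neg, neg_eq_zero] at hy₀
  exact ⟨-y, ⟨neg_lt_neg hy.2, by linarith [hy.1]⟩, hy₀, by rwa [neg_sq]⟩

end IsProlateSolution

lemma potential_pos_of_mem_Icc {c χ y z t : ℝ} (hy : 0 < χ - c ^ 2 * y ^ 2)
    (hz : 0 < χ - c ^ 2 * z ^ 2) (ht : t ∈ Icc y z) : 0 < χ - c ^ 2 * t ^ 2 := by
  rcases le_total 0 t with ht₀ | ht₀
  · nlinarith [mul_le_mul_of_nonneg_left (pow_le_pow_left₀ ht₀ ht.2 2) (sq_nonneg c)]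
  · nlinarith [mul_nonneg (sq_nonneg c) (by nlinarith [ht.1] : 0 ≤ y ^ 2 - t ^ 2)]

lemma add_card_mul_le_of_gap {C : Set ℝ} {S : Finset ℝ} {ℓ y z : ℝ}
    (hgap : ∀ a ∈ C, ∀ b ∈ C, a < b → ℓ ≤ b - a) (hsep : ∀ a ∈ S, ∀ b ∈ S, a < b →
      ∃ t ∈ C, t ∈ Ioo a b) (hy : y ∈ C) (hz : z ∈ C) (hyz : y ≤ z)
    (hyS : ∀ a ∈ S, y < a) (hSz : ∀ a ∈ S, a < z) : y + S.card * ℓ ≤ z := by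
  induction S using Finset.induction_on_max generalizing z with
  | empty => simpa using hyz
  | insert a s hmax ih =>
    obtain ⟨t, htC, hyt, hta, hst⟩ : ∃ t ∈ C, y ≤ t ∧ t < a ∧ ∀ b ∈ s, b < t := by
      rcases s.eq_empty_or_nonempty with rfl | hs
      · exact ⟨y, hy, le_rfl, hyS a (Finset.mem_insert_self a ∅), by simp⟩
      · obtain ⟨t, htC, ht⟩ := hsep (s.max' hs) (Finset.mem_insert_of_mem (s.max'_mem hs)) a
          (Finset.mem_insert_self a s) (hmax _ (s.max'_mem hs))
        have hyt := hyS _ (Finset.mem_insert_of_mem (s.max'_mem hs))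
        exact ⟨t, htC, (hyt.trans ht.1).le, ht.2, fun b hb => (s.le_max' b hb).trans_lt ht.1⟩
    have hle := ih (fun b hb b' hb' => hsep b (Finset.mem_insert_of_mem hb) b'
      (Finset.mem_insert_of_mem hb')) htC hyt (fun b hb => hyS b (Finset.mem_insert_of_mem hb)) hst
    have hlast := hgap t htC z hz (hta.trans (hSz a (Finset.mem_insert_self a s)))
    rw [Finset.card_insert_of_notMem fun ha => (hmax a ha).false]
    push_cast
    linarith

theorem IsProlateSolution.ncard_interiorZeros_mul_pi_lt {c χ : ℝ} {ψ : ℝ → ℝ}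
    (h : IsProlateSolution c χ ψ) (hc : 0 < c) (hχ : χ < c ^ 2)
    (hfin : (interiorZeros ψ).Finite) : (interiorZeros ψ).ncard * π < 2 * c := by
  rw [ncard_eq_toFinset_card _ hfin]
  set S := hfin.toFinset
  have hmem {t : ℝ} : t ∈ S ↔ t ∈ Ioo (-1 : ℝ) 1 ∧ ψ t = 0 := hfin.mem_toFinset
  rcases S.eq_empty_or_nonempty with hempty | hne
  · simp [hempty, hc]
  have hmin := hmem.1 (S.min'_mem hne)
  have hmax := hmem.1 (S.max'_mem hne)
  obtain ⟨y, hy, hy₀, hqy⟩ := h.exists_quasiDeriv_eq_zero_left hc hχ hmin.1 hmin.2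
    fun t ht ht₀ => ht.2.not_ge (S.min'_le t (hmem.2 ⟨⟨ht.1, ht.2.trans hmin.1.2⟩, ht₀⟩))
  obtain ⟨z, hz, hz₀, hqz⟩ := h.exists_quasiDeriv_eq_zero_right hc hχ hmax.1 hmax.2
    fun t ht ht₀ => ht.1.not_ge (S.le_max' t (hmem.2 ⟨⟨hmax.1.1.trans ht.1, ht.2⟩, ht₀⟩))
  have hyS : ∀ t ∈ S, y < t := fun t ht => hy.2.trans_le (S.min'_le t ht)
  have hSz : ∀ t ∈ S, t < z := fun t ht => (S.le_max' t ht).trans_lt hz.1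
  have hyz : y < z := (hyS _ (S.max'_mem hne)).trans hz.1
  have hIcc : Icc y z ⊆ Ioo (-1) 1 := Icc_subset_Ioo hy.1 hz.2
  have hcount := add_card_mul_le_of_gap (C := {t | t ∈ Icc y z ∧ quasiDeriv ψ t = 0}) (S := S)
    (fun a ha b hb hab => (h.pi_div_lt_sub_of_quasiDeriv_eq_zero hc hχ hfin hab
      ((Icc_subset_Icc ha.1.1 hb.1.2).trans hIcc)
      (fun t ht => potential_pos_of_mem_Icc hqy hqz (Icc_subset_Icc ha.1.1 hb.1.2 ht))
      ha.2 hb.2).le)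
    (fun a ha b hb hab => ?_) ⟨left_mem_Icc.2 hyz.le, hy₀⟩ ⟨right_mem_Icc.2 hyz.le, hz₀⟩
    hyz.le hyS hSz
  · have hlt : S.card * (π / c) < 2 := by linarith [hy.1, hz.2]
    rw [← mul_div_assoc, div_lt_iff₀ hc] at hlt
    exact hlt
  · obtain ⟨t, ht, ht₀⟩ := exists_deriv_eq_zero hab (h.continuousOn.mono
      (Icc_subset_Icc (hmem.1 ha).1.1.le (hmem.1 hb).1.2.le))
      ((hmem.1 ha).2.trans (hmem.1 hb).2.symm)
    exact ⟨t, ⟨⟨((hyS a ha).trans ht.1).le, (ht.2.trans (hSz b hb)).le⟩, quasiDeriv_eq_zero ht₀⟩,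
      ht⟩

/-! ### Counting zeros when `χ > c²` -/

/-- The phase of the WKB comparison functions: minus the primitive of `√((1 - t + a) / (1 - t))`. -/
noncomputable def comparisonPhase (a t : ℝ) : ℝ :=
  √(1 - t) * √(1 - t + a) + a * log (√(1 - t) + √(1 - t + a))

/-- The amplitude `((1 - t) / (1 - t + a)) ^ (1 / 4)` of the WKB comparison functions. -/
noncomputable def comparisonAmp (a t : ℝ) : ℝ := √(√(1 - t) / √(1 - t + a))

section Comparison

variable {a t : ℝ}

lemma comparisonAmp_pos (ha : 0 < a) (ht : t < 1) : 0 < comparisonAmp a t := by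
  have : 0 < 1 - t := sub_pos.2 ht
  unfold comparisonAmp
  positivity

lemma comparisonAmp_sq (a t : ℝ) : comparisonAmp a t ^ 2 = √(1 - t) / √(1 - t + a) :=
  sq_sqrt (by positivity)

lemma comparisonAmp_pow_four (ha : 0 < a) (ht : t < 1) :
    comparisonAmp a t ^ 4 = (1 - t) / (1 - t + a) := by
  rw [show comparisonAmp a t ^ 4 = (comparisonAmp a t ^ 2) ^ 2 by ring, comparisonAmp_sq, div_pow,
    sq_sqrt (by linarith), sq_sqrt (by linarith)]

lemma hasDerivAt_sqrt_one_sub_add {b : ℝ} (ht : 0 < 1 - t + b) :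
    HasDerivAt (fun t => √(1 - t + b)) (-1 / (2 * √(1 - t + b))) t :=
  (((hasDerivAt_id t).const_sub 1).add_const b).sqrt ht.ne'

lemma hasDerivAt_sqrt_one_sub (ht : t < 1) :
    HasDerivAt (fun t => √(1 - t)) (-1 / (2 * √(1 - t))) t := by
  simpa using hasDerivAt_sqrt_one_sub_add (b := 0) (by simpa using ht)

lemma hasDerivAt_comparisonPhase (ha : 0 < a) (ht : t < 1) :
    HasDerivAt (comparisonPhase a) (-(1 / comparisonAmp a t ^ 2)) t := by
  have hu : 0 < 1 - t := sub_pos.2 ht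
  have hA := hasDerivAt_sqrt_one_sub ht
  have hB := hasDerivAt_sqrt_one_sub_add (add_pos hu ha)
  have hA_pos : 0 < √(1 - t) := sqrt_pos.2 hu
  have hB_pos : 0 < √(1 - t + a) := sqrt_pos.2 (add_pos hu ha)
  convert! (hA.mul hB).add (((hA.add hB).log (add_pos hA_pos hB_pos).ne').const_mul a) using 1
  have ha_eq : a = √(1 - t + a) ^ 2 - √(1 - t) ^ 2 := by
    rw [sq_sqrt hu.le, sq_sqrt (add_pos hu ha).le]
    ring
  rw [comparisonAmp_sq]
  simp only [Pi.add_apply]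
  generalize √(1 - t) = A at *
  generalize √(1 - t + a) = B at *
  rw [ha_eq]
  field

lemma hasDerivAt_comparisonAmp (ha : 0 < a) (ht : t < 1) :
    HasDerivAt (comparisonAmp a)
      (-(comparisonAmp a t * (a / (4 * ((1 - t) * (1 - t + a)))))) t := by
  have hu : 0 < 1 - t := sub_pos.2 ht
  have hA_pos : 0 < √(1 - t) := sqrt_pos.2 hu
  have hB_pos : 0 < √(1 - t + a) := sqrt_pos.2 (add_pos hu ha)
  have hA_sq : √(1 - t) ^ 2 = 1 - t := sq_sqrt hu.le
  have hB_sq : √(1 - t + a) ^ 2 = 1 - t + a := sq_sqrt (add_pos hu ha).le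
  have hamp_pos := comparisonAmp_pos ha ht
  have hA_eq : √(1 - t) = comparisonAmp a t ^ 2 * √(1 - t + a) := by
    rw [comparisonAmp_sq, div_mul_cancel₀ _ hB_pos.ne']
  convert! ((hasDerivAt_sqrt_one_sub ht).div (hasDerivAt_sqrt_one_sub_add (add_pos hu ha))
    hB_pos.ne').sqrt (div_pos hA_pos hB_pos).ne' using 1
  change _ = _ / (2 * comparisonAmp a t)
  have ha_eq : a = √(1 - t + a) ^ 2 - √(1 - t) ^ 2 := by linarith
  have hprod : (1 - t) * (1 - t + a) = √(1 - t) ^ 2 * √(1 - t + a) ^ 2 := by rw [hA_sq, hB_sq]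
  rw [hprod]
  generalize comparisonAmp a t = g at *
  generalize √(1 - t) = A at *
  generalize √(1 - t + a) = B at *
  rw [ha_eq, hA_eq]
  field

lemma comparisonPhase_zero_sub_one (ha : 0 < a) :
    comparisonPhase a 0 - comparisonPhase a 1 =
      √(1 + a) + a * log (1 + √(1 + a)) - a * log a / 2 := by
  simp [comparisonPhase, log_sqrt ha.le, mul_div_assoc]

lemma continuousOn_comparisonPhase (ha : 0 < a) : ContinuousOn (comparisonPhase a) (Iic 1) := by
  refine ContinuousOn.add (by fun_prop) (continuousOn_const.mul (ContinuousOn.log (by fun_prop) ?_))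
  intro t ht
  have : 0 < 1 - t + a := by linarith [mem_Iic.1 ht]
  positivity

lemma strictAntiOn_comparisonPhase (ha : 0 < a) : StrictAntiOn (comparisonPhase a) (Iic 1) := by
  refine strictAntiOn_of_hasDerivWithinAt_neg (convex_Iic 1) (continuousOn_comparisonPhase ha)
    (f' := fun t => -(1 / comparisonAmp a t ^ 2)) (fun t ht => ?_) fun t ht => ?_ <;>
    rw [interior_Iic] at ht
  · exact (hasDerivAt_comparisonPhase ha ht).hasDerivWithinAt
  · exact neg_neg_of_pos (one_div_pos.2 (pow_pos (comparisonAmp_pos ha ht) 2))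

lemma hasDerivAt_comparisonAmp_logDeriv (ha : 0 < a) (ht : t < 1) :
    HasDerivAt (fun t => a / (4 * ((1 - t) * (1 - t + a))))
      ((1 / (1 - t) ^ 2 - 1 / (1 - t + a) ^ 2) / 4) t := by
  have hu : 0 < 1 - t := sub_pos.2 ht
  have hden : 0 < 4 * ((1 - t) * (1 - t + a)) := by positivity
  have hlin := (hasDerivAt_id t).const_sub 1
  convert! (((hlin.mul (hlin.add_const a)).const_mul 4).inv hden.ne').const_mul a using 1
  simp only [Pi.mul_apply, id]
  field

lemma solvesNormalForm_comparison (ha : 0 < a) (c σ : ℝ) {S : Set ℝ} (hS : S ⊆ Iio 1) :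
    SolvesNormalForm
      (fun t => c ^ 2 * (1 - t + a) / (1 - t) - (a / (4 * ((1 - t) * (1 - t + a)))) ^ 2 +
        (1 / (1 - t) ^ 2 - 1 / (1 - t + a) ^ 2) / 4)
      (fun t => comparisonAmp a t * sin (c * comparisonPhase a t - σ)) S := by
  have harg : ∀ t ∈ S, HasDerivAt (fun t => c * comparisonPhase a t - σ)
      (c * -(1 / comparisonAmp a t ^ 2)) t := fun t ht =>
    ((hasDerivAt_comparisonPhase ha (hS ht)).const_mul c).sub_const σ
  refine (solvesNormalForm_mul (g := fun t => -(c * cos (c * comparisonPhase a t - σ)))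
    (Q := fun t => c ^ 2 / comparisonAmp a t ^ 2) (fun t ht => (comparisonAmp_pos ha (hS ht)).ne')
    (fun t ht => hasDerivAt_comparisonAmp ha (hS ht))
    (fun t ht => ((hasDerivAt_comparisonAmp ha (hS ht)).mul
      (hasDerivAt_comparisonAmp_logDeriv ha (hS ht))).neg)
    (fun t ht => ?_) fun t ht => ?_).congr fun t ht => ?_
  · convert! (harg t ht).sin using 1
    ring
  · convert! ((harg t ht).cos.const_mul c).neg using 1
    ring
  · have hu : 0 < 1 - t := sub_pos.2 (hS ht)
    have hamp := comparisonAmp_pos ha (hS ht)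
    have hfour : c ^ 2 / comparisonAmp a t ^ 2 / comparisonAmp a t ^ 2 =
        c ^ 2 * (1 - t + a) / (1 - t) := by
      rw [div_div, ← pow_add, comparisonAmp_pow_four ha (hS ht), div_div_eq_mul_div]
    dsimp only
    rw [hfour]
    field

lemma comparison_potential_lt {c χ : ℝ} (ha : 0 < a) (hχ : c ^ 2 * (1 + 2 * a) ≤ χ)
    (ht : t ∈ Ico (0 : ℝ) 1) :
    c ^ 2 * (1 - t + a) / (1 - t) - (a / (4 * ((1 - t) * (1 - t + a)))) ^ 2 +
        (1 / (1 - t) ^ 2 - 1 / (1 - t + a) ^ 2) / 4 <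
      (χ - c ^ 2 * t ^ 2) / (1 - t ^ 2) + 1 / (1 - t ^ 2) ^ 2 := by
  have hu : 0 < 1 - t := sub_pos.2 ht.2
  have hp : 0 < 1 - t ^ 2 := by nlinarith [ht.1, ht.2]
  have hpu : 1 - t ^ 2 ≤ 2 * (1 - t) := by nlinarith [ht.2]
  have hmain : c ^ 2 * (1 - t + a) / (1 - t) ≤ (χ - c ^ 2 * t ^ 2) / (1 - t ^ 2) :=
    calc c ^ 2 * (1 - t + a) / (1 - t) = c ^ 2 + c ^ 2 * (2 * a) / (2 * (1 - t)) := by field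
      _ ≤ c ^ 2 + c ^ 2 * (2 * a) / (1 - t ^ 2) := by gcongr
      _ = (c ^ 2 * (1 + 2 * a) - c ^ 2 * t ^ 2) / (1 - t ^ 2) := by field
      _ ≤ (χ - c ^ 2 * t ^ 2) / (1 - t ^ 2) := by gcongr
  have hsing : 1 / (1 - t) ^ 2 / 4 ≤ 1 / (1 - t ^ 2) ^ 2 :=
    calc 1 / (1 - t) ^ 2 / 4 = 1 / (2 * (1 - t)) ^ 2 := by field
      _ ≤ 1 / (1 - t ^ 2) ^ 2 := by gcongr
  have hpos : 0 < 1 / (1 - t + a) ^ 2 := by positivity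
  linarith [sq_nonneg (a / (4 * ((1 - t) * (1 - t + a))))]

end Comparison

namespace IsProlateSolution

variable {a c χ : ℝ} {ψ : ℝ → ℝ}

lemma solvesNormalForm (h : IsProlateSolution c χ ψ) {S : Set ℝ} (hS : S ⊆ Ioo (-1) 1) :
    SolvesNormalForm (fun t => (χ - c ^ 2 * t ^ 2) / (1 - t ^ 2) + 1 / (1 - t ^ 2) ^ 2)
      (fun t => √(1 - t ^ 2) * ψ t) S := by
  have hp : ∀ t ∈ S, 0 < 1 - t ^ 2 := fun t ht => one_sub_sq_pos_of_mem_Ioo (hS ht)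
  have hne : ∀ t ∈ S, √(1 - t ^ 2) ≠ 0 := fun t ht => (sqrt_pos.2 (hp t ht)).ne'
  have hsq : ∀ t ∈ S, √(1 - t ^ 2) ^ 2 = 1 - t ^ 2 := fun t ht => sq_sqrt (hp t ht).le
  have hs : ∀ t ∈ S, HasDerivAt (fun t => √(1 - t ^ 2)) (-(t / √(1 - t ^ 2))) t := by
    intro t ht
    convert! (hasDerivAt_one_sub_sq t).sqrt (hp t ht).ne' using 1
    field
  have hs' : ∀ t ∈ S, HasDerivAt (fun t => -(t / √(1 - t ^ 2))) (-1 / √(1 - t ^ 2) ^ 3) t := by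
    intro t ht
    have := hne t ht
    convert! ((hasDerivAt_id t).div (hs t ht) (hne t ht)).neg using 1
    simp only [id]
    field_simp
    linear_combination hsq t ht
  refine (solvesNormalForm_mul (Q := fun t => χ - c ^ 2 * t ^ 2) hne hs hs' (fun t ht => ?_)
    fun t ht => h.hasDerivAt_quasiDeriv t (hS ht)).congr fun t ht => ?_
  · rw [hsq t ht]
    exact h.hasDerivAt (hS ht)
  · have hroot_sq := hsq t ht
    have hroot_ne := hne t ht
    dsimp only
    generalize √(1 - t ^ 2) = r at hroot_sq hroot_ne ⊢
    rw [← hroot_sq]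
    field

lemma exists_zero_of_phase_sub_eq_pi (h : IsProlateSolution c χ ψ) (hc : 0 < c) (ha : 0 < a)
    (hχ : c ^ 2 * (1 + 2 * a) ≤ χ) {α β : ℝ} (hα : 0 ≤ α) (hαβ : α < β) (hβ : β < 1)
    (hphase : c * comparisonPhase a α - c * comparisonPhase a β = π) :
    ∃ t ∈ Ioo α β, ψ t = 0 := by
  have hsub : Icc α β ⊆ Ico 0 1 := fun t ht => ⟨hα.trans ht.1, ht.2.trans_lt hβ⟩
  have hmem : Icc α β ⊆ Ioo (-1) 1 := fun t ht => ⟨by linarith [(hsub ht).1], (hsub ht).2⟩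
  have hanti {s t : ℝ} (hst : s < t) (ht : t ≤ β) :
      c * comparisonPhase a t < c * comparisonPhase a s := mul_lt_mul_of_pos_left
    (strictAntiOn_comparisonPhase ha (hst.le.trans (ht.trans hβ.le)) (ht.trans hβ.le) hst) hc
  obtain ⟨t, ht, ht₀⟩ := (solvesNormalForm_comparison ha c (c * comparisonPhase a β)
    (fun t ht => (hsub ht).2)).exists_zero_of_lt (h.solvesNormalForm hmem) hαβ
    (fun t ht => comparison_potential_lt ha hχ (hsub (Ioo_subset_Icc_self ht)))
    (by rw [hphase, sin_pi, mul_zero]) (by rw [sub_self, sin_zero, mul_zero]) fun t ht =>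
      (mul_pos (comparisonAmp_pos ha (ht.2.trans hβ)) (sin_pos_of_pos_of_lt_pi
        (by linarith [hanti ht.2 le_rfl]) (by linarith [hanti ht.1 ht.2.le]))).ne'
  have hroot := (sqrt_pos.2 (one_sub_sq_pos_of_mem_Ioo (hmem (Ioo_subset_Icc_self ht)))).ne'
  exact ⟨t, ht, (mul_eq_zero.1 ht₀).resolve_left hroot⟩

lemma exists_finset_zeros (h : IsProlateSolution c χ ψ) (hc : 0 < c) (ha : 0 < a)
    (hχ : c ^ 2 * (1 + 2 * a) ≤ χ) {N : ℕ} {b : ℝ} (hb : b ∈ Ico (0 : ℝ) 1)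
    (hphase : c * comparisonPhase a 0 - c * comparisonPhase a b = N * π) :
    ∃ S : Finset ℝ, S.card = N ∧ ∀ t ∈ S, t ∈ Ioo 0 b ∧ ψ t = 0 := by
  induction N generalizing b with
  | zero => exact ⟨∅, by simp⟩
  | succ N ih =>
    push_cast at hphase
    have hcont : ContinuousOn (fun t => c * comparisonPhase a t) (Icc 0 b) := continuousOn_const.mul
      ((continuousOn_comparisonPhase ha).mono fun t ht => ht.2.trans hb.2.le)
    obtain ⟨b', hb', hphase'⟩ := intermediate_value_Icc' hb.1 hcont
      (show c * comparisonPhase a b + π ∈ _ from ⟨by linarith [pi_pos],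
        by linarith [mul_nonneg N.cast_nonneg pi_pos.le]⟩)
    dsimp only at hphase'
    have hlt : b' < b := hb'.2.lt_of_ne (by rintro rfl; linarith [pi_pos])
    obtain ⟨S, hcard, hS⟩ := ih ⟨hb'.1, hlt.trans hb.2⟩ (by linarith)
    obtain ⟨t, ht, ht₀⟩ := h.exists_zero_of_phase_sub_eq_pi hc ha hχ hb'.1 hlt hb.2 (by linarith)
    refine ⟨insert t S, ?_, Finset.forall_mem_insert _ _ _ |>.2
      ⟨⟨⟨hb'.1.trans_lt ht.1, ht.2⟩, ht₀⟩, fun s hs =>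
        ⟨⟨(hS s hs).1.1, (hS s hs).1.2.trans hlt⟩, (hS s hs).2⟩⟩⟩
    rw [Finset.card_insert_of_notMem fun hmem => ht.1.not_gt (hS t hmem).1.2, hcard]

lemma exists_finset_pos_zeros (h : IsProlateSolution c χ ψ) (hc : 0 < c) (ha : 0 < a)
    (hχ : c ^ 2 * (1 + 2 * a) ≤ χ) {N : ℕ}
    (hN : N * π < c * (comparisonPhase a 0 - comparisonPhase a 1)) :
    ∃ S : Finset ℝ, S.card = N ∧ ∀ t ∈ S, t ∈ Ioo 0 1 ∧ ψ t = 0 := by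
  rw [mul_sub] at hN
  have hcont : ContinuousOn (fun t => c * comparisonPhase a t) (Icc 0 1) :=
    continuousOn_const.mul ((continuousOn_comparisonPhase ha).mono Icc_subset_Iic_self)
  obtain ⟨b, hb, hphase⟩ := intermediate_value_Icc' zero_le_one hcont
    (show c * comparisonPhase a 0 - N * π ∈ _ from ⟨by linarith,
      by linarith [mul_nonneg N.cast_nonneg pi_pos.le]⟩)
  dsimp only at hphase
  have hb₁ : b < 1 := hb.2.lt_of_ne (by rintro rfl; linarith)
  obtain ⟨S, hcard, hS⟩ := h.exists_finset_zeros hc ha hχ ⟨hb.1, hb₁⟩ (by linarith)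
  exact ⟨S, hcard, fun t ht => ⟨⟨(hS t ht).1.1, (hS t ht).1.2.trans hb₁⟩, (hS t ht).2⟩⟩

theorem two_mul_le_ncard_interiorZeros (h : IsProlateSolution c χ ψ) (hc : 0 < c) (ha : 0 < a)
    (hχ : c ^ 2 * (1 + 2 * a) ≤ χ) (hfin : (interiorZeros ψ).Finite) {N : ℕ}
    (hN : N * π < c * (comparisonPhase a 0 - comparisonPhase a 1)) :
    2 * N ≤ (interiorZeros ψ).ncard := by
  obtain ⟨S, hScard, hS⟩ := h.exists_finset_pos_zeros hc ha hχ hN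
  obtain ⟨T, hTcard, hT⟩ := h.comp_neg.exists_finset_pos_zeros hc ha hχ hN
  have hdisj : Disjoint S (T.map (Equiv.neg ℝ).toEmbedding) := by
    refine Finset.disjoint_left.2 fun t hts htT => ?_
    obtain ⟨s, hs, rfl⟩ := Finset.mem_map.1 htT
    exact (neg_lt_zero.2 (hT s hs).1.1).not_gt (hS _ hts).1.1
  have hsub : (↑(S.disjUnion _ hdisj) : Set ℝ) ⊆ interiorZeros ψ := by
    intro t ht
    rcases Finset.mem_disjUnion.1 ht with hts | htT
    · exact ⟨⟨by linarith [(hS t hts).1.1], (hS t hts).1.2⟩, (hS t hts).2⟩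
    · obtain ⟨s, hs, rfl⟩ := Finset.mem_map.1 htT
      exact ⟨⟨neg_lt_neg (hT s hs).1.2, by simpa using by linarith [(hT s hs).1.1]⟩, (hT s hs).2⟩
  calc 2 * N = (S.disjUnion _ hdisj).card := by
        rw [Finset.card_disjUnion, Finset.card_map, hScard, hTcard, two_mul]
    _ = (↑(S.disjUnion _ hdisj) : Set ℝ).ncard := (ncard_coe_finset _).symm
    _ ≤ (interiorZeros ψ).ncard := ncard_le_ncard hsub hfin

end IsProlateSolution

/-! ### The numerical estimate -/

section Estimates

variable {a c δ χ p q r x y : ℝ}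

lemma one_add_mul_log_le_comparisonPhase_sub (ha : 0 < a) :
    1 + a / 4 * log (16 * exp 1 / a) ≤ comparisonPhase a 0 - comparisonPhase a 1 := by
  rw [comparisonPhase_zero_sub_one ha]
  have hs_sq : √(1 + a) ^ 2 = 1 + a := sq_sqrt (by linarith)
  have hs : 1 < √(1 + a) := by
    rw [lt_sqrt zero_le_one]
    linarith
  generalize √(1 + a) = s at hs hs_sq ⊢
  have hs_sub : 0 < s - 1 := sub_pos.2 hs
  obtain rfl : a = (1 + s) * (s - 1) := by linarith
  have hlog : 1 - 4 / (1 + s) ≤ 3 * log (1 + s) - (log 16 + log (s - 1)) :=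
    calc 1 - 4 / (1 + s) ≤ 1 - ((1 + s) ^ 3 / (16 * (s - 1)))⁻¹ := by
          rw [inv_div, sub_le_sub_iff_left, div_le_div_iff₀ (by positivity) (by positivity)]
          nlinarith [mul_nonneg (by positivity : 0 ≤ 1 + s) (sq_nonneg (s - 3)),
            mul_nonneg (by positivity : 0 ≤ 1 + s) (sq_nonneg (s - 1))]
      _ ≤ log ((1 + s) ^ 3 / (16 * (s - 1))) := one_sub_inv_le_log_of_pos (by positivity)
      _ = 3 * log (1 + s) - (log 16 + log (s - 1)) := by
          rw [log_div (by positivity) (by positivity), log_mul (by norm_num) hs_sub.ne', log_pow]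
          norm_num
  have hscaled := mul_le_mul_of_nonneg_left hlog ha.le
  rw [mul_sub, show (1 + s) * (s - 1) * (4 / (1 + s)) = 4 * (s - 1) by field, mul_one] at hscaled
  rw [log_div (by positivity) ha.ne', log_mul (by norm_num) (by positivity), log_exp,
    log_mul (by positivity) hs_sub.ne']
  linarith

lemma mul_log_exp_one_mul_div_le (hx : 0 < x) (hy : 0 < y) : x * log (exp 1 * y / x) ≤ y := by
  have hlog : log (exp 1 * y / x) ≤ y / x := by
    rw [mul_div_assoc, log_mul (exp_pos 1).ne' (div_pos hy hx).ne', log_exp]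
    linarith [log_le_sub_one_of_pos (div_pos hy hx)]
  exact (le_div_iff₀' hx).1 hlog

lemma one_lt_five_mul_of_lt {n : ℕ} (hc : 0 < c) (hδ : 0 < δ) (hnlow : 2 * c / π < n)
    (hnhigh : (n : ℝ) < 2 * c / π + 2 / π ^ 2 * δ * log (4 * exp 1 * π * c / δ) - 2) :
    1 < 5 * c := by
  have hn : (1 : ℝ) ≤ n := mod_cast Nat.cast_pos.1 (lt_trans (by positivity) hnlow)
  have hlog := mul_log_exp_one_mul_div_le hδ (show 0 < 4 * π * c by positivity)
  rw [show exp 1 * (4 * π * c) = 4 * exp 1 * π * c by ring] at hlog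
  have hsum : 3 < 10 * c / π :=
    calc 3 ≤ (n : ℝ) + 2 := by linarith
      _ < 2 * c / π + 2 / π ^ 2 * (δ * log (4 * exp 1 * π * c / δ)) := by linarith
      _ ≤ 2 * c / π + 2 / π ^ 2 * (4 * π * c) := by gcongr
      _ = 10 * c / π := by field
  rw [lt_div_iff₀ pi_pos] at hsum
  linarith [pi_gt_three]

lemma inv_lt_of_one_le_sq_mul (hc : 1 < 5 * c) (hr : 0 ≤ r) (hqr : q ≤ r) (hp : 0 < p)
    (h : 1 ≤ 2 * p ^ 2 * (1 + 3 * c * (1 + q))) : p⁻¹ < 4 * √c * (1 + 3 / 4 * r) := by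
  have hc₀ : 0 < c := by linarith
  rw [inv_lt_iff_one_lt_mul₀ hp]
  refine lt_of_pow_lt_pow_left₀ 2 (by positivity) ?_
  have hcoeff : 2 * (1 + 3 * c * (1 + q)) < 16 * c * (1 + 3 / 4 * r) ^ 2 := by
    nlinarith [mul_nonneg hc₀.le hr, mul_nonneg hc₀.le (mul_nonneg hr hr),
      mul_le_mul_of_nonneg_left hqr hc₀.le]
  calc 1 ^ 2 ≤ p ^ 2 * (2 * (1 + 3 * c * (1 + q))) := by linarith
    _ < p ^ 2 * (16 * c * (1 + 3 / 4 * r) ^ 2) := by gcongr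
    _ = (4 * √c * (1 + 3 / 4 * r) * p) ^ 2 := by
        rw [mul_pow _ p, mul_pow, mul_pow, sq_sqrt hc₀.le]
        ring

lemma pow_four_div_le_pow_three (hq : 0 ≤ q) (hqr : q ≤ r) :
    (2 * (1 + 2 * q)) ^ 4 / (2 + 3 * q) ≤ 32 / 3 * (1 + 2 * r) ^ 3 :=
  calc (2 * (1 + 2 * q)) ^ 4 / (2 + 3 * q)
      = 16 * ((1 + 2 * q) / (2 + 3 * q)) * (1 + 2 * q) ^ 3 := by ring
    _ ≤ 16 * (2 / 3) * (1 + 2 * r) ^ 3 := by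
        gcongr ?_ * ?_ * (1 + 2 * ?_) ^ 3
        rw [div_le_div_iff₀ (by positivity) (by norm_num)]
        linarith
    _ = 32 / 3 * (1 + 2 * r) ^ 3 := by ring

lemma sub_sq_rpow_le (hc : 0 < c) (hδ : 0 < δ) (hχ : c ^ 2 ≤ χ)
    (hχ' : χ ≤ c ^ 2 + 8 * δ * c / π) :
    (χ - c ^ 2) ^ (1 / 4 : ℝ) ≤
      (8 / π) ^ (1 / 4 : ℝ) * δ ^ (1 / 4 : ℝ) * c ^ (1 / 4 : ℝ) := by
  rw [← mul_rpow (by positivity) hδ.le, ← mul_rpow (by positivity) hc.le]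
  refine rpow_le_rpow (sub_nonneg.2 hχ) ?_ (by norm_num)
  linarith [show 8 / π * δ * c = 8 * δ * c / π by ring]

lemma prolate_estimate_of_one_le_sq_mul (hc : 1 < 5 * c) (hδ : 0 < δ) (hχ : c ^ 2 < χ)
    (hχ' : χ ≤ c ^ 2 + 8 * δ * c / π) (hp : 0 < p) (h : 1 ≤ 2 * p ^ 2 * (1 + 3 * χ / c)) :
    7 / (2 * p) * ((4 * χ / c ^ 2 - 2) ^ 4 / (3 * χ / c ^ 2 - 1)) * (χ - c ^ 2) ^ (1 / 4 : ℝ) <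
      448 / 3 * (8 / π) ^ (1 / 4 : ℝ) * δ ^ (1 / 4 : ℝ) * c ^ (3 / 4 : ℝ) *
        (1 + 6 * δ / (π * c)) * (1 + 16 * δ / (π * c)) ^ 3 := by
  have hc₀ : 0 < c := by linarith
  have hroot := sub_sq_rpow_le hc₀ hδ hχ.le hχ'
  have hroot_pos : 0 < (χ - c ^ 2) ^ (1 / 4 : ℝ) := rpow_pos_of_pos (sub_pos.2 hχ) _
  generalize (χ - c ^ 2) ^ (1 / 4 : ℝ) = R at hroot hroot_pos ⊢
  obtain ⟨q, rfl⟩ : ∃ q, χ = c ^ 2 * (1 + q) := ⟨χ / c ^ 2 - 1, by field⟩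
  obtain ⟨r, rfl⟩ : ∃ r, δ = π * c * r / 8 := ⟨8 * δ / (π * c), by field⟩
  have hq : 0 < q := by nlinarith [sq_pos_of_pos hc₀]
  have hqr : q ≤ r := by
    rw [show 8 * (π * c * r / 8) * c / π = c ^ 2 * r by field, mul_one_add,
      add_le_add_iff_left] at hχ'
    exact le_of_mul_le_mul_left hχ' (sq_pos_of_pos hc₀)
  have hr : 0 < r := hq.trans_le hqr
  rw [show 3 * (c ^ 2 * (1 + q)) / c = 3 * c * (1 + q) by field] at h
  have hinv := inv_lt_of_one_le_sq_mul hc hr.le hqr hp h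
  have hfrac := pow_four_div_le_pow_three hq.le hqr
  rw [show 4 * (c ^ 2 * (1 + q)) / c ^ 2 - 2 = 2 * (1 + 2 * q) by field,
    show 3 * (c ^ 2 * (1 + q)) / c ^ 2 - 1 = 2 + 3 * q by field,
    show 6 * (π * c * r / 8) / (π * c) = 3 / 4 * r by field,
    show 16 * (π * c * r / 8) / (π * c) = 2 * r by field,
    show c ^ (3 / 4 : ℝ) = √c * c ^ (1 / 4 : ℝ) by
      rw [sqrt_eq_rpow, ← rpow_add hc₀]; norm_num]
  calc 7 / (2 * p) * ((2 * (1 + 2 * q)) ^ 4 / (2 + 3 * q)) * R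
      = 7 / 2 * p⁻¹ * ((2 * (1 + 2 * q)) ^ 4 / (2 + 3 * q)) * R := by ring
    _ < 7 / 2 * (4 * √c * (1 + 3 / 4 * r)) * ((2 * (1 + 2 * q)) ^ 4 / (2 + 3 * q)) * R := by gcongr
    _ ≤ 7 / 2 * (4 * √c * (1 + 3 / 4 * r)) * (32 / 3 * (1 + 2 * r) ^ 3) *
        ((8 / π) ^ (1 / 4 : ℝ) * (π * c * r / 8) ^ (1 / 4 : ℝ) * c ^ (1 / 4 : ℝ)) := by gcongr
    _ = _ := by ring

end Estimates

lemma IsProlateSolution.eigenvalue_lt {c δ χ : ℝ} {n : ℕ} {ψ : ℝ → ℝ}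
    (h : IsProlateSolution c χ ψ) (hc : 0 < c) (hδ : 0 < δ) (hfin : (interiorZeros ψ).Finite)
    (hcard : (interiorZeros ψ).ncard = n)
    (hn : (n : ℝ) < 2 * c / π + 2 / π ^ 2 * δ * log (4 * exp 1 * π * c / δ) - 2) :
    χ < c ^ 2 + 8 * δ * c / π := by
  by_contra! hχ
  obtain ⟨a, rfl⟩ : ∃ a, δ = π * c * a / 4 := ⟨4 * δ / (π * c), by field⟩
  have ha : 0 < a := by
    by_contra! ha
    nlinarith [mul_pos pi_pos hc]
  have hphase := one_add_mul_log_le_comparisonPhase_sub ha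
  rw [show 4 * exp 1 * π * c / (π * c * a / 4) = 16 * exp 1 / a by field] at hn
  have hhalf : ((n / 2 + 1 : ℕ) : ℝ) ≤ (n + 2) / 2 := by
    push_cast
    linarith [Nat.cast_div_le (α := ℝ) (m := n) (n := 2)]
  have hzeros : ((n / 2 + 1 : ℕ) : ℝ) * π < c * (comparisonPhase a 0 - comparisonPhase a 1) :=
    calc ((n / 2 + 1 : ℕ) : ℝ) * π ≤ (n + 2) / 2 * π := by gcongr
      _ < (2 * c / π + 2 / π ^ 2 * (π * c * a / 4) * log (16 * exp 1 / a)) / 2 * π := by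
          gcongr ?_ / 2 * π
          linarith
      _ = c * (1 + a / 4 * log (16 * exp 1 / a)) := by field
      _ ≤ c * (comparisonPhase a 0 - comparisonPhase a 1) := by gcongr
  have hcount := h.two_mul_le_ncard_interiorZeros hc ha
    (hχ.trans' (by field_simp; linarith)) hfin hzeros
  lia

theorem stmt10_general {c δ χ : ℝ} {n : ℕ} {ψ : ℝ → ℝ} (hc : 0 < c) (hδ : 0 < δ)
    (hnlow : 2 * c / π < n)
    (hnhigh : (n : ℝ) < 2 * c / π + 2 / π ^ 2 * δ * log (4 * exp 1 * π * c / δ) - 2)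
    (hψ : IsProlateSolution c χ ψ) (hcard : (interiorZeros ψ).ncard = n)
    (hnorm : ∫ t in (-1)..1, ψ t ^ 2 = 1) (hψ0 : ψ 0 ≠ 0) :
    7 / (2 * |ψ 0|) * ((4 * χ / c ^ 2 - 2) ^ 4 / (3 * χ / c ^ 2 - 1)) *
        (χ - c ^ 2) ^ (1 / 4 : ℝ) <
      448 / 3 * (8 / π) ^ (1 / 4 : ℝ) * δ ^ (1 / 4 : ℝ) * c ^ (3 / 4 : ℝ) *
        (1 + 6 * δ / (π * c)) * (1 + 16 * δ / (π * c)) ^ 3 := by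
  have hn : 0 < n := Nat.cast_pos.1 (lt_trans (by positivity) hnlow)
  have hfin : (interiorZeros ψ).Finite := finite_of_ncard_pos (hcard ▸ hn)
  rcases lt_trichotomy χ (c ^ 2) with hχ | rfl | hχ
  · have hcount := hψ.ncard_interiorZeros_mul_pi_lt hc hχ hfin
    rw [hcard] at hcount
    exact absurd hcount ((div_lt_iff₀ pi_pos).1 hnlow).not_gt
  · rw [sub_self, zero_rpow (by norm_num), mul_zero]
    positivity
  · have hnorm_le := hψ.integral_sq_le hc hχ.le hψ0
    rw [hnorm, ← sq_abs] at hnorm_le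
    exact prolate_estimate_of_one_le_sq_mul (one_lt_five_mul_of_lt hc hδ hnlow hnhigh) hδ hχ
      (hψ.eigenvalue_lt hc hδ hfin hcard hnhigh).le (abs_pos.2 hψ0) hnorm_le

theorem stmt10 (c : ℝ) (hc : 0 < c) (δ : ℝ) (hδ1 : 3 < δ) (hδ2 : δ < 5 * π / 4 * c)
    (n : ℕ) (hn : 0 < n) (hev : Even n)
    (hnlow : 2 * c / π < (n : ℝ))
    (hnhigh : (n : ℝ) ≤ 2 * c / π + 2 / π ^ 2 * δ * Real.log (4 * Real.exp 1 * π * c / δ) - 3)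
    (ψ : ℝ → ℝ) (χ : ℝ) (lam : ℂ)
    (hpswf : IsPSWF c n ψ χ lam) (hψ0 : ψ 0 ≠ 0) :
    7 / (2 * |ψ 0|) * ((4 * χ / c ^ 2 - 2) ^ 4 / (3 * χ / c ^ 2 - 1)) *
        (χ - c ^ 2) ^ ((1 : ℝ) / 4) <
      448 / 3 * (8 / π) ^ ((1 : ℝ) / 4) * δ ^ ((1 : ℝ) / 4) * c ^ ((3 : ℝ) / 4) *
        (1 + 6 * δ / (π * c)) * (1 + 16 * δ / (π * c)) ^ 3 := by
  have ⟨_, _, _, _, hcard, hnorm, _⟩ := hpswf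
  exact stmt10_general hc (by linarith) hnlow (by linarith) hpswf.isProlateSolution hcard hnorm hψ0
end

section
/- Let c > 0 and χ be real numbers with χ > c². Then ∫_0^{√(χ − c²)/2} log(g(x)) dx = ((χ − c²)/c) · ∫_0^{π/2} sin²θ / √(1 + ((χ − c²)/c²)·cos²θ) dθ, and moreover ∫_0^{√(χ − c²)/2} log(g(x)) dx = √χ · ( F(√((χ − c²)/χ)) − E(√((χ − c²)/χ)) ). -/
open Real

/-- The complete elliptic integral of the first kind. -/
noncomputable def EllipticF (k : ℝ) : ℝ :=
  ∫ θ in (0 : ℝ)..(π / 2), 1 / Real.sqrt (1 - k ^ 2 * Real.sin θ ^ 2)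

/-- The complete elliptic integral of the second kind. -/
noncomputable def EllipticE (k : ℝ) : ℝ :=
  ∫ θ in (0 : ℝ)..(π / 2), Real.sqrt (1 - k ^ 2 * Real.sin θ ^ 2)

/-- The function `g(x)` from the paper, built from `c` and `χ`. -/
noncomputable def gFun (c χ x : ℝ) : ℝ :=
  1 + 2 * ((χ - c ^ 2) / c ^ 2 - (2 * x / c) ^ 2) +
    Real.sqrt ((1 + 2 * ((χ - c ^ 2) / c ^ 2 - (2 * x / c) ^ 2)) ^ 2 - 1)

/-!
Since `log (y + √(y² - 1)) = arcosh y` and `cosh (2 t) = 1 + 2 sinh² t`, the integrand is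
`log (g x) = 2 arsinh (√(χ - c² - 4 x²) / c)`. The substitution `2 x = √(χ - c²) sin θ` turns the
integral into one of `arsinh (a cos θ) cos θ`, with `a = √(χ - c²) / c`, and integrating by parts
gives the first formula. The second one follows from
`1 + m cos² θ = (1 + m) (1 - m / (1 + m) sin² θ)` and `1 / s - s = (1 - s²) / s`.
-/

lemma arcosh_one_add_two_mul_sq {s : ℝ} (hs : 0 ≤ s) : arcosh (1 + 2 * s ^ 2) = 2 * arsinh s := by
  have cosh_double : cosh (2 * arsinh s) = 1 + 2 * s ^ 2 := by
    rw [cosh_two_mul, cosh_sq, sinh_arsinh]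
    ring
  have double_nonneg : 0 ≤ 2 * arsinh s := mul_nonneg zero_le_two (arsinh_nonneg_iff.2 hs)
  rw [← cosh_double, arcosh_cosh double_nonneg]

lemma integral_comp_sqrt_sq_sub_sq {E : Type*} [NormedAddCommGroup E] [NormedSpace ℝ E]
    (f : ℝ → E) {r : ℝ} (hr : 0 ≤ r) :
    ∫ x in (0 : ℝ)..r, f (√(r ^ 2 - x ^ 2)) =
      ∫ θ in (0 : ℝ)..(π / 2), (r * cos θ) • f (r * cos θ) := by
  have cos_nonneg {θ : ℝ} (hθ : θ ∈ Set.Icc 0 (π / 2)) : 0 ≤ cos θ :=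
    cos_nonneg_of_mem_Icc ⟨by linarith [hθ.1, pi_pos], hθ.2⟩
  have sqrt_comp_sin {θ : ℝ} (hθ : θ ∈ Set.Icc 0 (π / 2)) :
      √(r ^ 2 - (r * sin θ) ^ 2) = r * cos θ := by
    rw [← sqrt_sq (mul_nonneg hr (cos_nonneg hθ)), mul_pow, mul_pow, cos_sq']
    ring_nf
  have change_of_variables :=
    intervalIntegral.integral_deriv_smul_comp_of_deriv_nonneg (a := 0) (b := π / 2)
      (f := fun θ ↦ r * sin θ) (f' := fun θ ↦ r * cos θ) (g := fun x ↦ f (√(r ^ 2 - x ^ 2)))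
      (by fun_prop) (fun θ _ ↦ (hasDerivAt_sin θ).const_mul r)
      (fun θ hθ ↦ by
        rw [min_eq_left pi_div_two_pos.le, max_eq_right pi_div_two_pos.le] at hθ
        exact mul_nonneg hr (cos_nonneg (Set.Ioo_subset_Icc_self hθ)))
  simp only [sin_zero, sin_pi_div_two, mul_zero, mul_one] at change_of_variables
  rw [← change_of_variables]
  refine intervalIntegral.integral_congr fun θ hθ ↦ ?_
  rw [Set.uIcc_of_le pi_div_two_pos.le] at hθ
  simp only [Function.comp_apply, sqrt_comp_sin hθ]

lemma integral_arsinh_mul_cos_mul_cos (a : ℝ) :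
    ∫ θ in (0 : ℝ)..(π / 2), arsinh (a * cos θ) * cos θ =
      a * ∫ θ in (0 : ℝ)..(π / 2), sin θ ^ 2 / √(1 + a ^ 2 * cos θ ^ 2) := by
  have hasDerivAt_arsinh_mul_cos (θ : ℝ) : HasDerivAt (fun θ ↦ arsinh (a * cos θ))
      ((√(1 + (a * cos θ) ^ 2))⁻¹ * (a * -sin θ)) θ :=
    ((hasDerivAt_cos θ).const_mul a).arsinh
  have continuous_deriv : Continuous fun θ ↦ (√(1 + (a * cos θ) ^ 2))⁻¹ * (a * -sin θ) :=
    .mul (.inv₀ (by fun_prop) fun θ ↦ by positivity) (by fun_prop)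
  rw [intervalIntegral.integral_mul_deriv_eq_deriv_mul
    (fun θ _ ↦ hasDerivAt_arsinh_mul_cos θ) (fun θ _ ↦ hasDerivAt_sin θ)
    (continuous_deriv.intervalIntegrable _ _) (continuous_cos.intervalIntegrable _ _)]
  simp only [cos_pi_div_two, sin_zero, mul_zero, arsinh_zero, zero_mul, sub_self, zero_sub]
  rw [← intervalIntegral.integral_neg, ← intervalIntegral.integral_const_mul]
  refine intervalIntegral.integral_congr fun θ _ ↦ ?_
  simp only [mul_pow]
  ring

lemma ellipticF_sub_ellipticE {k : ℝ} (hk : k ^ 2 < 1) :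
    EllipticF k - EllipticE k =
      k ^ 2 * ∫ θ in (0 : ℝ)..(π / 2), sin θ ^ 2 / √(1 - k ^ 2 * sin θ ^ 2) := by
  have radicand_pos (θ : ℝ) : 0 < 1 - k ^ 2 * sin θ ^ 2 := by
    nlinarith [sin_sq_le_one θ, sq_nonneg k]
  have continuous_F : Continuous fun θ ↦ 1 / √(1 - k ^ 2 * sin θ ^ 2) :=
    continuous_const.div (by fun_prop) fun θ ↦ (sqrt_pos.2 (radicand_pos θ)).ne'
  have continuous_E : Continuous fun θ ↦ √(1 - k ^ 2 * sin θ ^ 2) := by fun_prop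
  rw [EllipticF, EllipticE, ← intervalIntegral.integral_sub
    (continuous_F.intervalIntegrable _ _) (continuous_E.intervalIntegrable _ _),
    ← intervalIntegral.integral_const_mul]
  refine intervalIntegral.integral_congr fun θ _ ↦ ?_
  have sqrt_radicand_pos := sqrt_pos.2 (radicand_pos θ)
  have sq_sqrt_radicand := sq_sqrt (radicand_pos θ).le
  field_simp
  linarith

lemma integral_sin_sq_div_sqrt_one_add_mul_cos_sq {m : ℝ} (hm : -1 < m) :
    ∫ θ in (0 : ℝ)..(π / 2), sin θ ^ 2 / √(1 + m * cos θ ^ 2) =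
      (√(1 + m))⁻¹ * ∫ θ in (0 : ℝ)..(π / 2), sin θ ^ 2 / √(1 - m / (1 + m) * sin θ ^ 2) := by
  have one_add_pos : 0 < 1 + m := by linarith
  rw [← intervalIntegral.integral_const_mul]
  refine intervalIntegral.integral_congr fun θ _ ↦ ?_
  have radicand_factor : 1 + m * cos θ ^ 2 = (1 + m) * (1 - m / (1 + m) * sin θ ^ 2) := by
    rw [cos_sq']
    field_simp
    ring
  simp only [radicand_factor, sqrt_mul one_add_pos.le]
  ring

lemma mul_integral_sin_sq_div_sqrt_eq_ellipticF_sub_ellipticE {m : ℝ} (hm : 0 ≤ m) :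
    m * ∫ θ in (0 : ℝ)..(π / 2), sin θ ^ 2 / √(1 + m * cos θ ^ 2) =
      √(1 + m) * (EllipticF (√(m / (1 + m))) - EllipticE (√(m / (1 + m)))) := by
  have one_add_pos : 0 < 1 + m := by linarith
  have sq_modulus : √(m / (1 + m)) ^ 2 = m / (1 + m) := sq_sqrt (by positivity)
  have sq_modulus_lt_one : √(m / (1 + m)) ^ 2 < 1 := by
    rw [sq_modulus, div_lt_one one_add_pos]
    linarith
  rw [ellipticF_sub_ellipticE sq_modulus_lt_one, sq_modulus,
    integral_sin_sq_div_sqrt_one_add_mul_cos_sq (by linarith)]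
  have sq_sqrt_one_add := sq_sqrt one_add_pos.le
  field_simp
  rw [sq_sqrt_one_add]

lemma log_gFun {c χ x : ℝ} (hc : 0 < c) (hx : (2 * x) ^ 2 ≤ χ - c ^ 2) :
    log (gFun c χ x) = 2 * arsinh (√(χ - c ^ 2 - (2 * x) ^ 2) / c) := by
  rw [← arcosh_one_add_two_mul_sq (by positivity), div_pow, sq_sqrt (sub_nonneg.2 hx), sub_div,
    ← div_pow (2 * x)]
  rfl

lemma integral_log_gFun {c χ : ℝ} (hc : 0 < c) (hχ : c ^ 2 ≤ χ) :
    ∫ x in (0 : ℝ)..(√(χ - c ^ 2) / 2), log (gFun c χ x) =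
      (χ - c ^ 2) / c *
        ∫ θ in (0 : ℝ)..(π / 2), sin θ ^ 2 / √(1 + (χ - c ^ 2) / c ^ 2 * cos θ ^ 2) := by
  set r := √(χ - c ^ 2)
  have r_nonneg : 0 ≤ r := sqrt_nonneg _
  have sq_r : χ - c ^ 2 = r ^ 2 := (sq_sqrt (sub_nonneg.2 hχ)).symm
  have log_gFun_eq {x : ℝ} (hx : x ∈ Set.uIcc 0 (r / 2)) :
      log (gFun c χ x) = 2 * arsinh (√(r ^ 2 - (2 * x) ^ 2) / c) := by
    rw [Set.uIcc_of_le (by positivity)] at hx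
    rw [log_gFun hc (by nlinarith [hx.1, hx.2]), sq_r]
  calc ∫ x in (0 : ℝ)..(r / 2), log (gFun c χ x)
      = 2 * ∫ x in (0 : ℝ)..(r / 2), arsinh (√(r ^ 2 - (2 * x) ^ 2) / c) := by
        rw [← intervalIntegral.integral_const_mul]
        exact intervalIntegral.integral_congr fun x hx ↦ log_gFun_eq hx
    _ = ∫ u in (0 : ℝ)..r, arsinh (√(r ^ 2 - u ^ 2) / c) := by
        rw [intervalIntegral.mul_integral_comp_mul_left
          (f := fun u ↦ arsinh (√(r ^ 2 - u ^ 2) / c)), mul_zero, mul_div_cancel₀ r two_ne_zero]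
    _ = ∫ θ in (0 : ℝ)..(π / 2), r * cos θ * arsinh (r * cos θ / c) :=
        integral_comp_sqrt_sq_sub_sq (fun y ↦ arsinh (y / c)) r_nonneg
    _ = r * ∫ θ in (0 : ℝ)..(π / 2), arsinh (r / c * cos θ) * cos θ := by
        rw [← intervalIntegral.integral_const_mul]
        refine intervalIntegral.integral_congr fun θ _ ↦ ?_
        simp only [mul_div_right_comm]
        ring
    _ = (χ - c ^ 2) / c *
          ∫ θ in (0 : ℝ)..(π / 2), sin θ ^ 2 / √(1 + (χ - c ^ 2) / c ^ 2 * cos θ ^ 2) := by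
        rw [integral_arsinh_mul_cos_mul_cos, sq_r, div_pow]
        ring

theorem stmt11 (c χ : ℝ) (hc : 0 < c) (hχ : χ > c ^ 2) :
    (∫ x in (0 : ℝ)..(Real.sqrt (χ - c ^ 2) / 2), Real.log (gFun c χ x)) =
      (χ - c ^ 2) / c *
        ∫ θ in (0 : ℝ)..(π / 2),
          Real.sin θ ^ 2 / Real.sqrt (1 + (χ - c ^ 2) / c ^ 2 * Real.cos θ ^ 2) ∧
    (∫ x in (0 : ℝ)..(Real.sqrt (χ - c ^ 2) / 2), Real.log (gFun c χ x)) =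
      Real.sqrt χ *
        (EllipticF (Real.sqrt ((χ - c ^ 2) / χ)) -
          EllipticE (Real.sqrt ((χ - c ^ 2) / χ))) := by
  have integral_eq := integral_log_gFun hc hχ.le
  refine ⟨integral_eq, integral_eq.trans ?_⟩
  set m := (χ - c ^ 2) / c ^ 2 with m_def
  have m_nonneg : 0 ≤ m := div_nonneg (sub_nonneg.2 hχ.le) (sq_nonneg c)
  have one_add_m : 1 + m = χ / c ^ 2 := by
    rw [m_def]
    field_simp
    ring
  have modulus_eq : m / (1 + m) = (χ - c ^ 2) / χ := by
    rw [one_add_m, m_def, div_div_div_cancel_right₀ (by positivity)]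
  have sqrt_eq : √χ = c * √(1 + m) := by
    rw [one_add_m, sqrt_div' _ (sq_nonneg c), sqrt_sq hc.le, mul_div_cancel₀ _ hc.ne']
  have coeff_eq : (χ - c ^ 2) / c = c * m := by
    rw [m_def]
    field_simp
  rw [coeff_eq, sqrt_eq, ← modulus_eq, mul_assoc, mul_assoc,
    mul_integral_sin_sq_div_sqrt_eq_ellipticF_sub_ellipticE m_nonneg]
end

section
/- Let c > 0 and χ be real numbers with χ > c², and suppose k₀ > 2, where k₀ is the largest integer k ≥ 1 with 2k·(2k+1) < χ − c². Then: σ₁ > σ₂ > ⋯ > σ_{k₀} > 1; r₂ > r₃ > ⋯ > r_{k₀} > 1; and r_k > σ_k > 1 for every k with 2 ≤ k ≤ k₀. -/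
open Real

/-- `B^I_k`. -/
noncomputable def BIseq (c χ : ℝ) (k : ℕ) : ℝ :=
  4 * (4 * (k : ℝ) + 1) * (4 * (k : ℝ) + 3) ^ 2 /
      (4 * (k : ℝ) * (4 * (k : ℝ) - 2) * (4 * (k : ℝ) + 7)) *
    ((χ - c ^ 2 - 2 * (k : ℝ) * (2 * (k : ℝ) + 1)) / c ^ 2)

/-- `B^{II}_k`. -/
noncomputable def BIIseq (k : ℕ) : ℝ :=
  2 + 60 / (32 * (k : ℝ) ^ 4 + 32 * (k : ℝ) ^ 3 - 38 * (k : ℝ) ^ 2 + 7 * (k : ℝ))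

/-- `σ_k`. -/
noncomputable def sigmaSeq (c χ : ℝ) (k : ℕ) : ℝ :=
  (BIseq c χ k + BIIseq k) / 2 +
    Real.sqrt (((BIseq c χ k + BIIseq k) / 2) ^ 2 - 1)

/-- The sequence `γ_k`. -/
noncomputable def gammaSeq (c χ : ℝ) : ℕ → ℝ
  | 0 => 0
  | 1 => Real.sqrt 2
  | 2 => 8 / (7 * Real.sqrt 2) * (2 + 3 * (χ - c ^ 2) / c ^ 2)
  | 3 => 16 * Real.sqrt 2 / 11 *
      (3 + 15 * (χ - c ^ 2) / c ^ 2 +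
        105 / 8 * ((χ - c ^ 2) / c ^ 2) * ((χ - c ^ 2 - 6) / c ^ 2) - 105 / (2 * c ^ 2))
  | (k + 4) =>
      (BIseq c χ (k + 2) + BIIseq (k + 2)) * gammaSeq c χ (k + 3) - gammaSeq c χ (k + 2)

/-- `r_k = γ_{k+1}/γ_k`. -/
noncomputable def rSeq (c χ : ℝ) (k : ℕ) : ℝ := gammaSeq c χ (k + 1) / gammaSeq c χ k

/-!
Put `b k = B^I_k + B^{II}_k`. Then `σ_k` is the larger fixed point of the map `x ↦ b k - x⁻¹`, and
the recurrence for `γ` says that this map sends `r_k` to `r_{k+1}`. The map is increasing and pushes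
every point above its larger fixed point down towards it, so `σ_k < r_k` implies
`σ_k < r_{k+1} < r_k`. Below the threshold `2k(2k+1) < χ - c²` the coefficients `b k` exceed `2` and
decrease, hence so do the fixed points `σ_k > 1`, and `σ_k < r_k` propagates to
`σ_{k+1} < σ_k < r_{k+1}`. The induction starts at `k = 2`, where the explicit values of `γ₂` and
`γ₃` give `r₂ ≥ b 1 > b 2 > σ₂`.
-/

section DominantRoot

/-- The larger root of `x ^ 2 - b * x + 1`, equivalently the larger fixed point of
`x ↦ b - x⁻¹`. It is meaningful for `2 ≤ b`; for `-2 < b < 2` the square root takes the junk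
value `0`. -/
noncomputable def dominantRoot (b : ℝ) : ℝ := b / 2 + √((b / 2) ^ 2 - 1)

variable {b r : ℝ}

lemma half_le_dominantRoot : b / 2 ≤ dominantRoot b :=
  le_add_of_nonneg_right (Real.sqrt_nonneg _)

lemma one_le_dominantRoot (hb : 2 ≤ b) : 1 ≤ dominantRoot b :=
  le_trans (by linarith) half_le_dominantRoot

lemma one_lt_dominantRoot (hb : 2 < b) : 1 < dominantRoot b :=
  lt_of_lt_of_le (by linarith) half_le_dominantRoot

lemma dominantRoot_add_inv (hb : 2 ≤ b) : dominantRoot b + (dominantRoot b)⁻¹ = b := by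
  have hpos : 0 < dominantRoot b := by linarith [one_le_dominantRoot hb]
  have hroot : dominantRoot b ^ 2 + 1 = b * dominantRoot b := by
    have hsqrt := Real.sq_sqrt (show 0 ≤ (b / 2) ^ 2 - 1 by nlinarith)
    unfold dominantRoot
    linear_combination hsqrt
  field_simp
  linarith

lemma strictMonoOn_dominantRoot : StrictMonoOn dominantRoot (Set.Ici 0) := by
  intro a (ha : 0 ≤ a) b _ hab
  have hsqrt : √((a / 2) ^ 2 - 1) ≤ √((b / 2) ^ 2 - 1) := by gcongr
  unfold dominantRoot
  linarith

lemma dominantRoot_lt_self (hb : 2 ≤ b) : dominantRoot b < b := by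
  have hpos : 0 < (dominantRoot b)⁻¹ := by
    have := one_le_dominantRoot hb
    positivity
  linarith [dominantRoot_add_inv hb]

lemma dominantRoot_lt_sub_inv (hb : 2 ≤ b) (hr : dominantRoot b < r) :
    dominantRoot b < b - r⁻¹ := by
  have hinv : r⁻¹ < (dominantRoot b)⁻¹ :=
    inv_strictAnti₀ (by linarith [one_le_dominantRoot hb]) hr
  linarith [dominantRoot_add_inv hb]

lemma sub_inv_lt_of_dominantRoot_lt (hb : 2 ≤ b) (hr : dominantRoot b < r) :
    b - r⁻¹ < r := by
  have hone := one_le_dominantRoot hb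
  have hs : 0 < dominantRoot b := by linarith
  have hrpos : 0 < r := hs.trans hr
  have hprod : 1 < dominantRoot b * r := by nlinarith
  have hcontract : (dominantRoot b)⁻¹ - r⁻¹ < r - dominantRoot b := by
    rw [inv_sub_inv hs.ne' hrpos.ne']
    exact div_lt_self (sub_pos.2 hr) hprod
  linarith [dominantRoot_add_inv hb]

end DominantRoot

section ThreeTermRecurrence

variable {b u : ℕ → ℝ} {m n k : ℕ}

lemma ratio_succ_of_recurrence (hrec : u (k + 2) = b k * u (k + 1) - u k)
    (hk : u (k + 1) ≠ 0) : u (k + 2) / u (k + 1) = b k - (u (k + 1) / u k)⁻¹ := by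
  rw [hrec, sub_div, mul_div_cancel_right₀ _ hk, inv_div]

lemma ratio_succ_of_dominantRoot_lt (hrec : u (k + 2) = b k * u (k + 1) - u k)
    (hb : 2 ≤ b k) (hk : dominantRoot (b k) < u (k + 1) / u k) :
    u (k + 2) / u (k + 1) = b k - (u (k + 1) / u k)⁻¹ := by
  refine ratio_succ_of_recurrence hrec fun hzero => ?_
  rw [hzero, zero_div] at hk
  linarith [one_le_dominantRoot hb]

lemma dominantRoot_lt_ratio_of_recurrence (hmn : m ≤ n) (hb : 2 ≤ b n)
    (hanti : AntitoneOn b (Set.Icc m n))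
    (hrec : ∀ k, m ≤ k → k < n → u (k + 2) = b k * u (k + 1) - u k)
    (hm : dominantRoot (b m) < u (m + 1) / u m) :
    dominantRoot (b n) < u (n + 1) / u n := by
  induction n, hmn using Nat.le_induction with
  | base => exact hm
  | succ n hmn ih =>
    have hstep : b (n + 1) ≤ b n := hanti ⟨hmn, n.le_succ⟩ ⟨by omega, le_rfl⟩ n.le_succ
    have hbn : 2 ≤ b n := hb.trans hstep
    have hn : dominantRoot (b n) < u (n + 1) / u n :=
      ih hbn (hanti.mono (Set.Icc_subset_Icc_right n.le_succ))
        fun k hmk hkn => hrec k hmk (by omega)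
    calc dominantRoot (b (n + 1))
      _ ≤ dominantRoot (b n) :=
        strictMonoOn_dominantRoot.monotoneOn (Set.mem_Ici.2 (by linarith))
          (Set.mem_Ici.2 (by linarith)) hstep
      _ < b n - (u (n + 1) / u n)⁻¹ := dominantRoot_lt_sub_inv hbn hn
      _ = u (n + 2) / u (n + 1) :=
        (ratio_succ_of_dominantRoot_lt (hrec n hmn n.lt_succ_self) hbn hn).symm

end ThreeTermRecurrence

section Coefficients

/-- The coefficient `B^I_k + B^{II}_k` of the recurrence `γ_{k+2} = b_k γ_{k+1} - γ_k`. -/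
noncomputable def recurrenceCoeff (c χ : ℝ) (k : ℕ) : ℝ := BIseq c χ k + BIIseq k

/-- The rational factor of `B^I_k`, as a function of a real argument. -/
noncomputable def leadingFactor (x : ℝ) : ℝ :=
  4 * (4 * x + 1) * (4 * x + 3) ^ 2 / (4 * x * (4 * x - 2) * (4 * x + 7))

lemma leadingFactor_pos {x : ℝ} (hx : 1 / 2 < x) : 0 < leadingFactor x := by
  have hden : 0 < 4 * x - 2 := by linarith
  unfold leadingFactor
  positivity

lemma leadingFactor_eq {x : ℝ} (hx : 1 / 2 < x) :
    leadingFactor x = 4 * (1 + 1 / (4 * x)) * (1 + (1 + 16 / (4 * x + 7)) / (4 * x - 2)) := by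
  have hden : 4 * x - 2 ≠ 0 := by linarith
  have hx0 : x ≠ 0 := by linarith
  have hden' : 4 * x + 7 ≠ 0 := by linarith
  unfold leadingFactor
  field_simp
  ring

lemma antitoneOn_leadingFactor : AntitoneOn leadingFactor (Set.Ioi (1 / 2)) := by
  intro x (hx : 1 / 2 < x) y (hy : 1 / 2 < y) hxy
  have hdenx : 0 < 4 * x - 2 := by linarith
  have hdeny : 0 < 4 * y - 2 := by linarith
  rw [leadingFactor_eq hx, leadingFactor_eq hy]
  gcongr

lemma BIIseq_eq (k : ℕ) :
    BIIseq k = 2 + 60 / ((k : ℝ) * (2 * k - 1) * (4 * k - 1) * (4 * k + 7)) := by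
  unfold BIIseq
  ring_nf

variable {c χ : ℝ} {i j k : ℕ}

lemma two_lt_BIIseq (hk : 1 ≤ k) : 2 < BIIseq k := by
  have hk' : (1 : ℝ) ≤ k := by exact_mod_cast hk
  have h2 : 0 < 2 * (k : ℝ) - 1 := by linarith
  have h4 : 0 < 4 * (k : ℝ) - 1 := by linarith
  rw [BIIseq_eq]
  exact lt_add_of_pos_right _ (by positivity)

lemma strictAntiOn_BIIseq : StrictAntiOn BIIseq (Set.Ici 1) := by
  intro i (hi : 1 ≤ i) j _ hij
  have hi' : (1 : ℝ) ≤ i := by exact_mod_cast hi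
  have hij' : (i : ℝ) < j := by exact_mod_cast hij
  have h2 : 0 < 2 * (i : ℝ) - 1 := by linarith
  have h4 : 0 < 4 * (i : ℝ) - 1 := by linarith
  rw [BIIseq_eq, BIIseq_eq]
  gcongr

lemma BIseq_nonneg (hk : 1 ≤ k) (hthr : 2 * (k : ℝ) * (2 * k + 1) < χ - c ^ 2) :
    0 ≤ BIseq c χ k := by
  have hk' : (1 : ℝ) ≤ k := by exact_mod_cast hk
  exact mul_nonneg (leadingFactor_pos (by linarith)).le
    (div_nonneg (sub_pos.2 hthr).le (sq_nonneg c))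

lemma BIseq_le_BIseq (hi : 1 ≤ i) (hij : i ≤ j)
    (hthr : 2 * (j : ℝ) * (2 * j + 1) < χ - c ^ 2) : BIseq c χ j ≤ BIseq c χ i := by
  have hi' : (1 : ℝ) ≤ i := by exact_mod_cast hi
  have hij' : (i : ℝ) ≤ j := by exact_mod_cast hij
  refine mul_le_mul (antitoneOn_leadingFactor (Set.mem_Ioi.2 (by linarith))
    (Set.mem_Ioi.2 (by linarith)) hij') ?_ (div_nonneg (sub_pos.2 hthr).le (sq_nonneg c))
    (leadingFactor_pos (by linarith)).le
  gcongr

lemma two_lt_recurrenceCoeff (hk : 1 ≤ k) (hthr : 2 * (k : ℝ) * (2 * k + 1) < χ - c ^ 2) :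
    2 < recurrenceCoeff c χ k :=
  lt_add_of_nonneg_of_lt (BIseq_nonneg hk hthr) (two_lt_BIIseq hk)

lemma recurrenceCoeff_lt_recurrenceCoeff (hi : 1 ≤ i) (hij : i < j)
    (hthr : 2 * (j : ℝ) * (2 * j + 1) < χ - c ^ 2) :
    recurrenceCoeff c χ j < recurrenceCoeff c χ i :=
  add_lt_add_of_le_of_lt (BIseq_le_BIseq hi hij.le hthr)
    (strictAntiOn_BIIseq hi (hi.trans hij.le) hij)

lemma threshold_lt_of_le (hij : i ≤ j) (hthr : 2 * (j : ℝ) * (2 * j + 1) < χ - c ^ 2) :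
    2 * (i : ℝ) * (2 * i + 1) < χ - c ^ 2 :=
  lt_of_le_of_lt (by gcongr) hthr

lemma strictAntiOn_recurrenceCoeff (hthr : 2 * (k : ℝ) * (2 * k + 1) < χ - c ^ 2) :
    StrictAntiOn (recurrenceCoeff c χ) (Set.Icc 1 k) :=
  fun _ hi _ hj hij =>
    recurrenceCoeff_lt_recurrenceCoeff hi.1 hij (threshold_lt_of_le hj.2 hthr)

end Coefficients

section SigmaAndRatio

variable {c χ : ℝ} {i j k : ℕ}

lemma sigmaSeq_eq_dominantRoot (c χ : ℝ) (k : ℕ) :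
    sigmaSeq c χ k = dominantRoot (recurrenceCoeff c χ k) := rfl

lemma one_lt_sigmaSeq (hk : 1 ≤ k) (hthr : 2 * (k : ℝ) * (2 * k + 1) < χ - c ^ 2) :
    1 < sigmaSeq c χ k :=
  one_lt_dominantRoot (two_lt_recurrenceCoeff hk hthr)

lemma sigmaSeq_lt_sigmaSeq (hi : 1 ≤ i) (hij : i < j)
    (hthr : 2 * (j : ℝ) * (2 * j + 1) < χ - c ^ 2) : sigmaSeq c χ j < sigmaSeq c χ i := by
  have hj := two_lt_recurrenceCoeff (hi.trans hij.le) hthr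
  have hlt := recurrenceCoeff_lt_recurrenceCoeff hi hij hthr
  rw [sigmaSeq_eq_dominantRoot, sigmaSeq_eq_dominantRoot]
  exact strictMonoOn_dominantRoot (Set.mem_Ici.2 (by linarith)) (Set.mem_Ici.2 (by linarith)) hlt

lemma gammaSeq_add_two (hk : 2 ≤ k) : gammaSeq c χ (k + 2) =
    recurrenceCoeff c χ k * gammaSeq c χ (k + 1) - gammaSeq c χ k := by
  obtain ⟨m, rfl⟩ := Nat.exists_eq_add_of_le' hk
  rfl

lemma gammaSeq_two_pos (hχ : c ^ 2 < χ) : 0 < gammaSeq c χ 2 := by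
  have : 0 < χ - c ^ 2 := sub_pos.2 hχ
  simp only [gammaSeq]
  positivity

-- The recurrence fails at `k = 1`: a positive multiple of `χ - c ^ 2` stands in place of `-γ₁`.
lemma gammaSeq_three (c χ : ℝ) : gammaSeq c χ 3 =
    recurrenceCoeff c χ 1 * gammaSeq c χ 2 + 28 * √2 / 11 * ((χ - c ^ 2) / c ^ 2) := by
  have hsqrt : 8 / (7 * √2) = 4 / 7 * √2 := by
    rw [div_eq_iff (by positivity)]
    linear_combination (-4) * Real.sq_sqrt (show (0 : ℝ) ≤ 2 by norm_num)
  simp only [gammaSeq, recurrenceCoeff, BIseq, BIIseq, hsqrt, Nat.cast_one]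
  ring

lemma recurrenceCoeff_one_le_rSeq_two (hχ : c ^ 2 < χ) :
    recurrenceCoeff c χ 1 ≤ rSeq c χ 2 := by
  have : 0 < χ - c ^ 2 := sub_pos.2 hχ
  rw [rSeq, le_div_iff₀ (gammaSeq_two_pos hχ), gammaSeq_three]
  exact le_add_of_nonneg_right (by positivity)

lemma sigmaSeq_two_lt_rSeq_two (hthr : 2 * ((2 : ℕ) : ℝ) * (2 * (2 : ℕ) + 1) < χ - c ^ 2) :
    sigmaSeq c χ 2 < rSeq c χ 2 := by
  have hχ : c ^ 2 < χ := by
    push_cast at hthr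
    linarith
  calc sigmaSeq c χ 2
    _ < recurrenceCoeff c χ 2 := dominantRoot_lt_self (two_lt_recurrenceCoeff one_le_two hthr).le
    _ < recurrenceCoeff c χ 1 := recurrenceCoeff_lt_recurrenceCoeff le_rfl one_lt_two hthr
    _ ≤ rSeq c χ 2 := recurrenceCoeff_one_le_rSeq_two hχ

lemma sigmaSeq_lt_rSeq (hk : 2 ≤ k) (hthr : 2 * (k : ℝ) * (2 * k + 1) < χ - c ^ 2) :
    sigmaSeq c χ k < rSeq c χ k :=
  dominantRoot_lt_ratio_of_recurrence hk (two_lt_recurrenceCoeff (by omega) hthr).le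
    ((strictAntiOn_recurrenceCoeff hthr).antitoneOn.mono (Set.Icc_subset_Icc_left one_le_two))
    (fun _ hj _ => gammaSeq_add_two hj) (sigmaSeq_two_lt_rSeq_two (threshold_lt_of_le hk hthr))

lemma rSeq_succ_lt_rSeq (hk : 2 ≤ k) (hthr : 2 * (k : ℝ) * (2 * k + 1) < χ - c ^ 2) :
    rSeq c χ (k + 1) < rSeq c χ k := by
  have hb := (two_lt_recurrenceCoeff (by omega) hthr).le
  have hσr := sigmaSeq_lt_rSeq hk hthr
  calc rSeq c χ (k + 1)
    _ = recurrenceCoeff c χ k - (rSeq c χ k)⁻¹ :=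
      ratio_succ_of_dominantRoot_lt (gammaSeq_add_two hk) hb hσr
    _ < rSeq c χ k := sub_inv_lt_of_dominantRoot_lt hb hσr

end SigmaAndRatio

theorem stmt13 (c χ : ℝ) (hc : 0 < c) (hχ : χ > c ^ 2) (k₀ : ℕ)
    (hk₀ : IsGreatest {k : ℕ | 1 ≤ k ∧ 2 * (k : ℝ) * (2 * (k : ℝ) + 1) < χ - c ^ 2} k₀)
    (hk₀2 : 2 < k₀) :
    ((∀ k : ℕ, 1 ≤ k → k < k₀ → sigmaSeq c χ (k + 1) < sigmaSeq c χ k) ∧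
        1 < sigmaSeq c χ k₀) ∧
    ((∀ k : ℕ, 2 ≤ k → k < k₀ → rSeq c χ (k + 1) < rSeq c χ k) ∧
        1 < rSeq c χ k₀) ∧
    (∀ k : ℕ, 2 ≤ k → k ≤ k₀ → sigmaSeq c χ k < rSeq c χ k ∧ 1 < sigmaSeq c χ k) := by
  obtain ⟨hone, hthr₀⟩ := hk₀.1
  have hthr : ∀ k ≤ k₀, 2 * (k : ℝ) * (2 * k + 1) < χ - c ^ 2 :=
    fun k hk => threshold_lt_of_le hk hthr₀
  refine ⟨⟨fun k hk hlt => ?_, one_lt_sigmaSeq hone hthr₀⟩, ⟨fun k hk hlt => ?_, ?_⟩,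
    fun k hk hle => ⟨?_, ?_⟩⟩
  · exact sigmaSeq_lt_sigmaSeq hk k.lt_succ_self (hthr _ hlt)
  · exact rSeq_succ_lt_rSeq hk (hthr k hlt.le)
  · exact (one_lt_sigmaSeq hone hthr₀).trans (sigmaSeq_lt_rSeq hk₀2.le hthr₀)
  · exact sigmaSeq_lt_rSeq hk (hthr k hle)
  · exact one_lt_sigmaSeq (by omega) (hthr k hle)
end

section
/- Let c > 0 and χ be real numbers with χ > c² + 6, and let k₀ be the largest integer k ≥ 1 with 2k·(2k+1) < χ − c². Then √2 = β₁ < β₂ < ⋯ < β_{k₀} < β_{k₀+1} < β_{k₀+2}, and 1 = α₁ < α₂ < ⋯ < α_{k₀} < α_{k₀+1} < α_{k₀+2}. -/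
open Real

/-- `A_k`. -/
noncomputable def ASeq (k : ℕ) : ℝ :=
  (k : ℝ) * (2 * (k : ℝ) - 1) * (4 * (k : ℝ) + 3) /
      (((k : ℝ) + 1) * (2 * (k : ℝ) + 1) * (4 * (k : ℝ) - 1)) *
    Real.sqrt ((4 * (k : ℝ) + 5) / (4 * (k : ℝ) - 3))

/-- `B_k`. -/
noncomputable def BSeq (c χ : ℝ) (k : ℕ) : ℝ :=
  (χ - 2 * (k : ℝ) * (2 * (k : ℝ) + 1)) / c ^ 2 *
      ((4 * (k : ℝ) + 3) * Real.sqrt ((4 * (k : ℝ) + 1) * (4 * (k : ℝ) + 5))) /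
      ((2 * (k : ℝ) + 1) * (2 * (k : ℝ) + 2)) -
    (4 * (k : ℝ) * (2 * (k : ℝ) + 1) - 1) * Real.sqrt ((4 * (k : ℝ) + 1) * (4 * (k : ℝ) + 5)) /
      ((4 * (k : ℝ) - 1) * (2 * (k : ℝ) + 1) * (2 * (k : ℝ) + 2))

/-- The sequence `α_k`. -/
noncomputable def alphaSeq (c χ : ℝ) : ℕ → ℝ
  | 0 => 0
  | 1 => 1
  | 2 => BSeq c χ 0
  | (k + 3) => BSeq c χ (k + 1) * alphaSeq c χ (k + 2) - ASeq (k + 1) * alphaSeq c χ (k + 1)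

/-- The sequence `β_k = α_k·√(2/(4k−3))`. -/
noncomputable def betaSeq (c χ : ℝ) (k : ℕ) : ℝ :=
  alphaSeq c χ k * Real.sqrt (2 / (4 * (k : ℝ) - 3))

/-!
The quantity `√(2 / (4k - 3))` that turns `α_k` into `β_k` is the `L²[-1, 1]` norm of the Legendre
polynomial `P_{2k-2}`, and it absorbs all the square roots in `A_k` and `B_k`. In terms of `β` the
three-term recurrence becomes a recurrence for increments,
`β_{k+2} - β_{k+1} = r_k (β_{k+1} - β_k) + g_k β_{k+1}`, with `r_k ≥ 0` for all `k` and `g_k > 0` as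
long as `2k(2k+1) < χ - c²`, so positivity and growth propagate together up to that threshold.
The conventions `α_0 = β_0 = 0` make the recurrences valid from `k = 0` on, so that the induction
can start from `β_0 < β_1`.
Finally `α_k` is `β_k` divided by a decreasing factor, hence it increases as well.
-/

theorem nonneg_and_lt_succ_of_increment_eq {R : Type*} [Ring R] [LinearOrder R]
    [IsStrictOrderedRing R] {u r g : ℕ → R} {m : ℕ}
    (hu : ∀ k < m, u (k + 2) - u (k + 1) = r k * (u (k + 1) - u k) + g k * u (k + 1))
    (hr : ∀ k < m, 0 ≤ r k) (hg : ∀ k < m, 0 < g k) (h₀ : 0 ≤ u 0) (h₀₁ : u 0 < u 1) :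
    ∀ k ≤ m, 0 ≤ u k ∧ u k < u (k + 1) := by
  intro k hk
  induction k with
  | zero => exact ⟨h₀, h₀₁⟩
  | succ k ih =>
    obtain ⟨hnonneg, hlt⟩ := ih (by lia)
    have hpos : 0 < u (k + 1) := hnonneg.trans_lt hlt
    have hincrement : 0 < u (k + 2) - u (k + 1) := by
      rw [hu k hk]
      exact add_pos_of_nonneg_of_pos (mul_nonneg (hr k hk) (sub_pos.2 hlt).le)
        (mul_pos (hg k hk) hpos)
    exact ⟨hpos.le, sub_pos.1 hincrement⟩

theorem sqrt_mul_mul_sqrt_div {x y z : ℝ} (hx : 0 < x) (hy : 0 < y) :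
    √(x * y) * √(z / y) = x * √(z / x) := by
  have hxy : x * y * (z / y) = x ^ 2 * (z / x) := by field_simp
  rw [← sqrt_mul (by positivity), hxy, sqrt_mul (by positivity), sqrt_sq hx.le]

/-- The `L²[-1, 1]` norm of the Legendre polynomial `P_{2k-2}`, for `k ≥ 1`; it vanishes at `k = 0`
because the radicand is then negative. -/
noncomputable def legendreNorm (k : ℕ) : ℝ := √(2 / (4 * k - 3))

theorem legendreNorm_pos {k : ℕ} (hk : 1 ≤ k) : 0 < legendreNorm k := by
  have : (1 : ℝ) ≤ k := mod_cast hk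
  exact sqrt_pos.2 (div_pos two_pos (by linarith))

theorem legendreNorm_succ_le {k : ℕ} (hk : 1 ≤ k) : legendreNorm (k + 1) ≤ legendreNorm k := by
  have : (1 : ℝ) ≤ k := mod_cast hk
  unfold legendreNorm
  gcongr
  · linarith
  · lia

/-- The coefficient `r_k` of the previous increment in the recurrence for the increments of `β`. -/
noncomputable def incrementRatio (k : ℕ) : ℝ :=
  k * (2 * k - 1) * (4 * k + 3) / ((k + 1) * (2 * k + 1) * (4 * k - 1))

/-- The coefficient `g_k` of `β_{k+1}` in the recurrence for the increments of `β`. -/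
noncomputable def incrementGain (c χ : ℝ) (k : ℕ) : ℝ :=
  (χ - c ^ 2 - 2 * k * (2 * k + 1)) / c ^ 2 *
    ((4 * k + 1) * (4 * k + 3) / ((2 * k + 1) * (2 * k + 2)))

theorem incrementRatio_nonneg (k : ℕ) : 0 ≤ incrementRatio k := by
  rcases Nat.eq_zero_or_pos k with rfl | hk
  · simp [incrementRatio]
  · have : (1 : ℝ) ≤ k := mod_cast hk
    have : (0 : ℝ) < 2 * k - 1 := by linarith
    have : (0 : ℝ) < 4 * k - 1 := by linarith
    unfold incrementRatio
    positivity

theorem incrementGain_pos {c χ : ℝ} (hc : c ≠ 0) {k : ℕ}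
    (hk : 2 * (k : ℝ) * (2 * k + 1) < χ - c ^ 2) : 0 < incrementGain c χ k := by
  have := sub_pos.2 hk
  unfold incrementGain
  positivity

theorem ASeq_mul_legendreNorm (k : ℕ) :
    ASeq k * legendreNorm (k + 2) = incrementRatio k * legendreNorm k := by
  rcases Nat.eq_zero_or_pos k with rfl | hk
  · simp [ASeq, incrementRatio]
  · have : (1 : ℝ) ≤ k := mod_cast hk
    have hden : (0 : ℝ) < 4 * k - 3 := by linarith
    have hindex : 4 * ((k + 2 : ℕ) : ℝ) - 3 = 4 * k + 5 := by push_cast; ring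
    have hsqrt : √((4 * k + 5) / (4 * k - 3)) * √(2 / (4 * k + 5)) = √(2 / (4 * k - 3 : ℝ)) := by
      rw [← sqrt_mul (by positivity)]
      congr 1
      field_simp
    rw [ASeq, legendreNorm, hindex, mul_assoc, hsqrt, incrementRatio, legendreNorm]

theorem one_add_incrementRatio_add_incrementGain {c : ℝ} (hc : c ≠ 0) (χ : ℝ) (k : ℕ) :
    1 + incrementRatio k + incrementGain c χ k =
      ((χ - 2 * k * (2 * k + 1)) / c ^ 2 * (4 * k + 3) / ((2 * k + 1) * (2 * k + 2)) -
        (4 * k * (2 * k + 1) - 1) / ((4 * k - 1) * (2 * k + 1) * (2 * k + 2))) * (4 * k + 1) := by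
  have hne : (k * 4 - 1 : ℝ) ≠ 0 := by
    have : (k * 4 - 1 : ℤ) ≠ 0 := by lia
    exact_mod_cast this
  unfold incrementRatio incrementGain
  field_simp
  ring

theorem BSeq_mul_legendreNorm {c : ℝ} (hc : c ≠ 0) (χ : ℝ) (k : ℕ) :
    BSeq c χ k * legendreNorm (k + 2) =
      (1 + incrementRatio k + incrementGain c χ k) * legendreNorm (k + 1) := by
  have hindex₁ : 4 * ((k + 1 : ℕ) : ℝ) - 3 = 4 * k + 1 := by push_cast; ring
  have hindex₂ : 4 * ((k + 2 : ℕ) : ℝ) - 3 = 4 * k + 5 := by push_cast; ring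
  have hsqrt : √((4 * k + 1) * (4 * k + 5)) * √(2 / (4 * k + 5)) =
      (4 * k + 1) * √(2 / (4 * k + 1 : ℝ)) :=
    sqrt_mul_mul_sqrt_div (by positivity) (by positivity)
  rw [one_add_incrementRatio_add_incrementGain hc, mul_assoc, legendreNorm, legendreNorm,
    hindex₁, hindex₂, ← hsqrt, BSeq]
  ring

section Sequences

variable (c χ : ℝ)

theorem alphaSeq_add_two (k : ℕ) :
    alphaSeq c χ (k + 2) = BSeq c χ k * alphaSeq c χ (k + 1) - ASeq k * alphaSeq c χ k := by
  cases k <;> simp [alphaSeq]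

theorem betaSeq_eq_alphaSeq_mul_legendreNorm (k : ℕ) :
    betaSeq c χ k = alphaSeq c χ k * legendreNorm k := rfl

theorem betaSeq_zero : betaSeq c χ 0 = 0 := by
  simp [betaSeq, alphaSeq]

theorem betaSeq_one : betaSeq c χ 1 = √2 := by
  norm_num [betaSeq, alphaSeq]

variable {c χ}

theorem betaSeq_increment_eq (hc : c ≠ 0) (k : ℕ) :
    betaSeq c χ (k + 2) - betaSeq c χ (k + 1) =
      incrementRatio k * (betaSeq c χ (k + 1) - betaSeq c χ k) +
        incrementGain c χ k * betaSeq c χ (k + 1) := by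
  simp only [betaSeq_eq_alphaSeq_mul_legendreNorm, alphaSeq_add_two]
  linear_combination alphaSeq c χ (k + 1) * BSeq_mul_legendreNorm hc χ k -
    alphaSeq c χ k * ASeq_mul_legendreNorm k

theorem betaSeq_nonneg_and_lt_succ (hc : c ≠ 0) {m : ℕ}
    (hm : 2 * (m : ℝ) * (2 * m + 1) < χ - c ^ 2) {k : ℕ} (hk : k ≤ m + 1) :
    0 ≤ betaSeq c χ k ∧ betaSeq c χ k < betaSeq c χ (k + 1) := by
  refine nonneg_and_lt_succ_of_increment_eq (fun j _ ↦ betaSeq_increment_eq hc j)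
    (fun j _ ↦ incrementRatio_nonneg j) (fun j hj ↦ incrementGain_pos hc (hm.trans_le' ?_))
    (betaSeq_zero c χ).ge (by simp [betaSeq_zero, betaSeq_one]) k hk
  have : j ≤ m := Nat.lt_succ_iff.1 hj
  gcongr

theorem alphaSeq_lt_succ_of_betaSeq_lt_succ {k : ℕ} (hk : 1 ≤ k) (hnonneg : 0 ≤ betaSeq c χ k)
    (hlt : betaSeq c χ k < betaSeq c χ (k + 1)) : alphaSeq c χ k < alphaSeq c χ (k + 1) := by
  have hpos : 0 < alphaSeq c χ (k + 1) :=
    pos_of_mul_pos_left (hnonneg.trans_lt hlt) (legendreNorm_pos (by lia)).le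
  refine lt_of_mul_lt_mul_right ?_ (legendreNorm_pos hk).le
  calc alphaSeq c χ k * legendreNorm k
      < alphaSeq c χ (k + 1) * legendreNorm (k + 1) := hlt
    _ ≤ alphaSeq c χ (k + 1) * legendreNorm k := by gcongr; exact legendreNorm_succ_le hk

end Sequences

theorem stmt16 (c χ : ℝ) (hc : 0 < c) (hχ : χ > c ^ 2 + 6) (k₀ : ℕ)
    (hk₀ : IsGreatest {k : ℕ | 1 ≤ k ∧ 2 * (k : ℝ) * (2 * (k : ℝ) + 1) < χ - c ^ 2} k₀) :
    (betaSeq c χ 1 = Real.sqrt 2 ∧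
      ∀ k : ℕ, 1 ≤ k → k ≤ k₀ + 1 → betaSeq c χ k < betaSeq c χ (k + 1)) ∧
    (alphaSeq c χ 1 = 1 ∧
      ∀ k : ℕ, 1 ≤ k → k ≤ k₀ + 1 → alphaSeq c χ k < alphaSeq c χ (k + 1)) := by
  have hbeta {k : ℕ} (hk : k ≤ k₀ + 1) :
      0 ≤ betaSeq c χ k ∧ betaSeq c χ k < betaSeq c χ (k + 1) :=
    betaSeq_nonneg_and_lt_succ hc.ne' hk₀.1.2 hk
  refine ⟨⟨betaSeq_one c χ, fun k _ hk ↦ (hbeta hk).2⟩, rfl, fun k hk₁ hk ↦ ?_⟩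
  obtain ⟨hnonneg, hlt⟩ := hbeta hk
  exact alphaSeq_lt_succ_of_betaSeq_lt_succ hk₁ hnonneg hlt
end
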